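/- Fix an integer d ≥ 1, p ∈ (1,∞), δ ≥ 0, and let (μ_t)_{t≥0} be a convolution semigroup in 𝒫_p(ℝ^d) with 𝒲_p(μ_t, δ_0) → 0 as t ↓ 0. Let f ∈ C₀(ℝ^d) and define u : [0,∞) → C₀(ℝ^d) by u(t) := 𝒮(t)f, where 𝒮(t)f := lim_{n→∞} 𝒮^n(t)f. Then u is a viscosity solution of the equation ∂_t u(t,x) = A^μ u(t)(x) + δ·|∇u(t,x)| on (0,∞)×ℝ^d with initial condition u(0,x) = f(x), where A^μ is the generator of the convolution semigroup (S^μ(t))_{t≥0}. -/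

import Mathlib

open MeasureTheory Filter Topology ENNReal NNReal Set ZeroAtInfty
noncomputable section

/-- Euclidean space ℝ^d. -/
abbrev Ed (d : ℕ) := EuclideanSpace ℝ (Fin d)

/-- `𝒫_p(ℝ^d)`: Borel probability measures with finite `p`-th moment. -/
def MemPp {d : ℕ} (p : ℝ) (μ : Measure (Ed d)) : Prop :=
  IsProbabilityMeasure μ ∧ ∫⁻ x, (‖x‖₊ : ℝ≥0∞) ^ p ∂μ < ∞

/-- `γ` is a coupling of `μ` and `ν`. -/
def IsCoupling {d : ℕ} (γ : Measure (Ed d × Ed d)) (μ ν : Measure (Ed d)) : Prop :=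
  γ.map Prod.fst = μ ∧ γ.map Prod.snd = ν

/-- The `p`-Wasserstein distance `𝒲_p(μ, ν)`. -/
def Wp {d : ℕ} (p : ℝ) (μ ν : Measure (Ed d)) : ℝ :=
  (⨅ γ ∈ {γ : Measure (Ed d × Ed d) | IsCoupling γ μ ν},
    (∫⁻ q, (‖q.2 - q.1‖₊ : ℝ≥0∞) ^ p ∂γ) ^ (1 / p)).toReal

/-- The scaled penalty `φ_t(r) = t·φ(r/t)` for `t > 0`; `φ_0(0) = 0`, `φ_0(r) = ∞` for `r > 0`. -/
def phit (φ : ℝ≥0 → ℝ≥0∞) (t : ℝ) (r : ℝ≥0) : ℝ≥0∞ :=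
  if 0 < t then (t.toNNReal : ℝ≥0∞) * φ (r / t.toNNReal) else (if r = 0 then 0 else ∞)

/-- `φ` is a penalty function: lower semicontinuous, convex, increasing, not constant,
`φ(0) = 0`, and `x ↦ φ(x^{1/p})` is convex. -/
structure IsPenalty (p : ℝ) (φ : ℝ≥0 → ℝ≥0∞) : Prop where
  lsc : LowerSemicontinuous φ
  convex : ∀ a b l m : ℝ≥0, l + m = 1 →
    φ (l * a + m * b) ≤ (l : ℝ≥0∞) * φ a + (m : ℝ≥0∞) * φ b
  mono : Monotone φ
  not_const : ∃ a b, φ a ≠ φ b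
  map_zero : φ 0 = 0
  convex_rpow : ∀ a b l m : ℝ≥0, l + m = 1 →
    φ ((l * a + m * b) ^ (1 / p)) ≤ (l : ℝ≥0∞) * φ (a ^ (1 / p)) + (m : ℝ≥0∞) * φ (b ^ (1 / p))

/-- The convex conjugate `φ*(y) = sup_{x ≥ 0} (xy − φ(x))`. -/
def phiStar (φ : ℝ≥0 → ℝ≥0∞) (y : ℝ≥0) : ℝ≥0∞ :=
  ⨆ x : ℝ≥0, ((x * y : ℝ≥0) : ℝ≥0∞) - φ x

/-- The one-step operator `S(t)f(x) = sup_ν ( ∫ f(x+y) ν(dy) − φ_t(𝒲_p(μ_t, ν)) )`. -/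
def Sop {d : ℕ} (p : ℝ) (φ : ℝ≥0 → ℝ≥0∞) (μt : Measure (Ed d)) (t : ℝ)
    (f : Ed d → ℝ) (x : Ed d) : ℝ :=
  sSup { r : ℝ | ∃ ν : Measure (Ed d), MemPp p ν ∧ ∃ c : ℝ, 0 ≤ c ∧
    phit φ t (Wp p μt ν).toNNReal ≤ ENNReal.ofReal c ∧ r = (∫ y, f (x + y) ∂ν) - c }

/-- The iterated operator `𝒮ⁿ(t) = S(2⁻ⁿ)^{∘ k} ∘ S(t − k·2⁻ⁿ)`, `k = ⌊2ⁿ t⌋`. -/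
def SiterN {d : ℕ} (p : ℝ) (φ : ℝ≥0 → ℝ≥0∞) (μ : ℝ → Measure (Ed d)) (n : ℕ) (t : ℝ)
    (f : Ed d → ℝ) : Ed d → ℝ :=
  (fun g => Sop p φ (μ ((2 : ℝ) ^ n)⁻¹) ((2 : ℝ) ^ n)⁻¹ g)^[⌊(2:ℝ)^n * t⌋₊]
    (Sop p φ (μ (t - ⌊(2:ℝ)^n * t⌋₊ * ((2:ℝ)^n)⁻¹)) (t - ⌊(2:ℝ)^n * t⌋₊ * ((2:ℝ)^n)⁻¹) f)

/-- The limiting operator `𝒮(t)f = lim_n 𝒮ⁿ(t)f` (a decreasing limit, i.e. an infimum). -/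
def Slim {d : ℕ} (p : ℝ) (φ : ℝ≥0 → ℝ≥0∞) (μ : ℝ → Measure (Ed d)) (t : ℝ)
    (f : Ed d → ℝ) (x : Ed d) : ℝ :=
  ⨅ n : ℕ, SiterN p φ μ n t f x

/-- `f ∈ C₀(ℝ^d)`: continuous and vanishing at infinity. -/
def IsC0 {d : ℕ} (f : Ed d → ℝ) : Prop :=
  Continuous f ∧ Tendsto f (cocompact (Ed d)) (𝓝 0)

/-- `(μ_t)_{t ≥ 0}` is a convolution semigroup in `𝒫_p(ℝ^d)`. -/
def IsConvSemigroup {d : ℕ} (p : ℝ) (μ : ℝ → Measure (Ed d)) : Prop :=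
  μ 0 = Measure.dirac 0 ∧ (∀ s t : ℝ, 0 ≤ s → 0 ≤ t → μ (s + t) = (μ s).conv (μ t)) ∧
    ∀ t : ℝ, 0 ≤ t → MemPp p (μ t)

/-- `𝒲_p(μ_t, δ_0) → 0` as `t ↓ 0`. -/
def WContinuousAtZero {d : ℕ} (p : ℝ) (μ : ℝ → Measure (Ed d)) : Prop :=
  Tendsto (fun t => Wp p (μ t) (Measure.dirac 0)) (𝓝[>] (0:ℝ)) (𝓝 0)

/-- The semigroup of the underlying Lévy process, `S^μ(t)f(x) = ∫ f(x+y) μ_t(dy)`. -/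
def Smu {d : ℕ} (μ : ℝ → Measure (Ed d)) (t : ℝ) (f : Ed d → ℝ) (x : Ed d) : ℝ :=
  ∫ y, f (x + y) ∂(μ t)

/-- `f ∈ D(A^μ)` with `A^μ f = Af`: `(S^μ(t)f − f)/t → Af` uniformly as `t ↓ 0`. -/
def HasGenerator {d : ℕ} (μ : ℝ → Measure (Ed d)) (f Af : Ed d → ℝ) : Prop :=
  TendstoUniformly (fun t x => (Smu μ t f x - f x) / t) Af (𝓝[>] (0:ℝ))

/-- `f ∈ C₀¹(ℝ^d)`: continuously differentiable, vanishing at infinity, with gradient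
vanishing at infinity. -/
def IsC01 {d : ℕ} (f : Ed d → ℝ) : Prop :=
  IsC0 f ∧ ContDiff ℝ 1 f ∧ Tendsto (fun x => gradient f x) (cocompact (Ed d)) (𝓝 0)


/-- The one-step operator with Wasserstein-ball constraint:
`S(t)f(x) = sup { ∫ f(x+y) ν(dy) : ν ∈ 𝒫_p(ℝ^d), 𝒲_p(μ_t, ν) ≤ δ·t }`. -/
def SopD {d : ℕ} (p δ : ℝ) (μt : Measure (Ed d)) (t : ℝ) (f : Ed d → ℝ) (x : Ed d) : ℝ :=
  sSup { r : ℝ | ∃ ν : Measure (Ed d), MemPp p ν ∧ Wp p μt ν ≤ δ * t ∧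
    r = ∫ y, f (x + y) ∂ν }

/-- The iterated operator `𝒮ⁿ(t) = S(2⁻ⁿ)^{∘ k} ∘ S(t − k·2⁻ⁿ)`, `k = ⌊2ⁿ t⌋`. -/
def SiterND {d : ℕ} (p δ : ℝ) (μ : ℝ → Measure (Ed d)) (n : ℕ) (t : ℝ)
    (f : Ed d → ℝ) : Ed d → ℝ :=
  (fun g => SopD p δ (μ ((2 : ℝ) ^ n)⁻¹) ((2 : ℝ) ^ n)⁻¹ g)^[⌊(2:ℝ)^n * t⌋₊]
    (SopD p δ (μ (t - ⌊(2:ℝ)^n * t⌋₊ * ((2:ℝ)^n)⁻¹)) (t - ⌊(2:ℝ)^n * t⌋₊ * ((2:ℝ)^n)⁻¹) f)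

/-- The limiting operator `𝒮(t)f = lim_n 𝒮ⁿ(t)f` (a decreasing limit, i.e. an infimum). -/
def SlimD {d : ℕ} (p δ : ℝ) (μ : ℝ → Measure (Ed d)) (t : ℝ)
    (f : Ed d → ℝ) (x : Ed d) : ℝ :=
  ⨅ n : ℕ, SiterND p δ μ n t f x

/-- A test function: `v : (0,∞) → C₀(ℝ^d)` differentiable w.r.t. the supremum norm with
derivative `v'`, and `v(t) ∈ D(A^μ) ∩ C₀¹(ℝ^d)` for all `t > 0`. -/
def IsTestFunction {d : ℕ} (μ : ℝ → Measure (Ed d)) (v v' : ℝ → C₀(Ed d, ℝ)) : Prop :=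
  ∀ t : ℝ, 0 < t →
    HasDerivAt v (v' t) t ∧ (∃ Af : Ed d → ℝ, HasGenerator μ (⇑(v t)) Af) ∧ IsC01 (⇑(v t))

/-- `u` is a viscosity subsolution of `∂_t u = A^μ u + δ|∇u|`, `u(0) = f`. -/
def IsViscositySubsolD {d : ℕ} (δ : ℝ) (μ : ℝ → Measure (Ed d))
    (f : C₀(Ed d, ℝ)) (u : ℝ → C₀(Ed d, ℝ)) : Prop :=
  ContinuousOn u (Ici 0) ∧ u 0 = f ∧
  ∀ t : ℝ, 0 < t → ∀ x : Ed d, ∀ v v' : ℝ → C₀(Ed d, ℝ), IsTestFunction μ v v' →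
    (∀ s : ℝ, 0 < s → ∀ y, u s y ≤ v s y) → v t x = u t x →
    ∀ Av : Ed d → ℝ, HasGenerator μ (⇑(v t)) Av →
      v' t x ≤ Av x + δ * ‖gradient (⇑(v t)) x‖

/-- `u` is a viscosity supersolution of `∂_t u = A^μ u + δ|∇u|`, `u(0) = f`. -/
def IsViscositySupersolD {d : ℕ} (δ : ℝ) (μ : ℝ → Measure (Ed d))
    (f : C₀(Ed d, ℝ)) (u : ℝ → C₀(Ed d, ℝ)) : Prop :=
  ContinuousOn u (Ici 0) ∧ u 0 = f ∧
  ∀ t : ℝ, 0 < t → ∀ x : Ed d, ∀ v v' : ℝ → C₀(Ed d, ℝ), IsTestFunction μ v v' →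
    (∀ s : ℝ, 0 < s → ∀ y, v s y ≤ u s y) → v t x = u t x →
    ∀ Av : Ed d → ℝ, HasGenerator μ (⇑(v t)) Av →
      Av x + δ * ‖gradient (⇑(v t)) x‖ ≤ v' t x

/-!
The one-step operators `S(t)` satisfy `S(s) ∘ S(t) ≤ S(s + t)`, because two transport plans can be
glued along the convolution; hence `𝒮ⁿ(t)f` decreases in `n`. For `‖w‖ ≤ δ` the law
`μ_t ∗ δ_{tw}` lies in the ball defining `S(t)`, so the linear semigroup `T_w` with drift `w` stays
below every iterate. Trapped between `T_0(t)f` and `S(t)f`, the limit `𝒮(t)f` vanishes at infinity,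
the convergence is uniform by Dini's theorem, and for dyadic `h`
`T_w(h)𝒮(t)f ≤ 𝒮(t + h)f ≤ S(h)𝒮(t)f`.
Replacing `𝒮` by a test function `v` touching it at `(t, x)` and expanding to first order in `h`
gives both viscosity inequalities: on the right `S(h)` gains at most `δ|∇v(x)|` per unit time over
`S^μ(h)`, and on the left the drift `w = δ∇v(x)/|∇v(x)|` attains this rate.
-/

section Niveloid

variable {E : Type*} [NormedAddCommGroup E] {g g₁ g₂ : E → ℝ} {T T' : (E → ℝ) → E → ℝ}

/-- Bounded uniformly continuous functions; the operators below are only evaluated on these. -/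
structure IsBUC (g : E → ℝ) : Prop where
  uniformContinuous : UniformContinuous g
  bounded : ∃ M, ∀ x, |g x| ≤ M

namespace IsBUC

theorem exists_modulus (hg : IsBUC g) {ε : ℝ} (hε : 0 < ε) :
    ∃ r > 0, ∀ a, ‖a‖ < r → ∀ x, g (x + a) ≤ g x + ε := by
  obtain ⟨r, hr, hgr⟩ := Metric.uniformContinuous_iff.1 hg.uniformContinuous ε hε
  refine ⟨r, hr, fun a ha x => ?_⟩
  have hdist : |g (x + a) - g x| < ε := hgr (by simpa using ha)
  linarith [(abs_lt.1 hdist).2]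

theorem of_modulus (hb : ∃ M, ∀ x, |g x| ≤ M)
    (h : ∀ ε > 0, ∃ r > 0, ∀ a, ‖a‖ < r → ∀ x, g (x + a) ≤ g x + ε) : IsBUC g := by
  refine ⟨Metric.uniformContinuous_iff.2 fun ε hε => ?_, hb⟩
  obtain ⟨r, hr, hgr⟩ := h (ε / 2) (half_pos hε)
  refine ⟨r, hr, fun {x y} hxy => ?_⟩
  have hx := hgr (x - y) (by rwa [← dist_eq_norm]) y
  have hy := hgr (y - x) (by rwa [← dist_eq_norm, dist_comm]) x
  rw [add_sub_cancel] at hx hy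
  exact abs_lt.2 ⟨by linarith, by linarith⟩

theorem zero : IsBUC (0 : E → ℝ) :=
  ⟨uniformContinuous_const, 0, by simp⟩

theorem comp_add_right (hg : IsBUC g) (a : E) : IsBUC fun x => g (x + a) :=
  ⟨hg.uniformContinuous.comp (uniformContinuous_add_right a),
    hg.bounded.imp fun _ hM x => hM (x + a)⟩

theorem of_zeroAtInfty (f : C₀(E, ℝ)) : IsBUC f :=
  ⟨ZeroAtInftyContinuousMap.uniformContinuous f, ‖f‖, fun x => by
    simpa [ZeroAtInftyContinuousMap.norm_toBCF_eq_norm] using f.toBCF.norm_coe_le_norm x⟩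

end IsBUC

/-- A translation invariant niveloid fixing `0`, on bounded uniformly continuous functions:
`le_add` expresses monotonicity and `T (g + c) = T g + c` in one inequality. -/
structure IsNiveloid (T : (E → ℝ) → E → ℝ) : Prop where
  map_zero (x : E) : T 0 x = 0
  le_add {g₁ g₂ : E → ℝ} (h₁ : IsBUC g₁) (h₂ : IsBUC g₂) {c : ℝ} (h : ∀ x, g₁ x ≤ g₂ x + c)
    (x : E) : T g₁ x ≤ T g₂ x + c
  map_translate (g : E → ℝ) (a x : E) : T (fun y => g (y + a)) x = T g (x + a)

namespace IsNiveloid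

theorem mono (hT : IsNiveloid T) (h₁ : IsBUC g₁) (h₂ : IsBUC g₂) (h : ∀ x, g₁ x ≤ g₂ x) (x : E) :
    T g₁ x ≤ T g₂ x := by
  simpa using hT.le_add h₁ h₂ (c := 0) (by simpa using h) x

theorem abs_sub_le (hT : IsNiveloid T) (h₁ : IsBUC g₁) (h₂ : IsBUC g₂) {c : ℝ}
    (h : ∀ x, |g₁ x - g₂ x| ≤ c) (x : E) : |T g₁ x - T g₂ x| ≤ c := by
  have hle := hT.le_add h₁ h₂ (fun y => by linarith [(abs_le.1 (h y)).2]) x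
  have hge := hT.le_add h₂ h₁ (fun y => by linarith [(abs_le.1 (h y)).1]) x
  exact abs_le.2 ⟨by linarith, by linarith⟩

theorem abs_le (hT : IsNiveloid T) (hg : IsBUC g) {M : ℝ} (hM : ∀ x, |g x| ≤ M) (x : E) :
    |T g x| ≤ M := by
  simpa [hT.map_zero] using hT.abs_sub_le hg .zero (by simpa using hM) x

theorem map_add_le (hT : IsNiveloid T) (hg : IsBUC g) {a : E} {ε : ℝ}
    (h : ∀ x, g (x + a) ≤ g x + ε) (x : E) : T g (x + a) ≤ T g x + ε := by
  rw [← hT.map_translate]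
  exact hT.le_add (hg.comp_add_right a) hg h x

theorem map_isBUC (hT : IsNiveloid T) (hg : IsBUC g) : IsBUC (T g) := by
  refine .of_modulus (hg.bounded.imp fun M hM => hT.abs_le hg hM) fun ε hε => ?_
  obtain ⟨r, hr, hgr⟩ := hg.exists_modulus hε
  exact ⟨r, hr, fun a ha => hT.map_add_le hg (hgr a ha)⟩

protected theorem id : IsNiveloid (id : (E → ℝ) → E → ℝ) where
  map_zero _ := rfl
  le_add _ _ _ h := h
  map_translate _ _ _ := rfl

theorem comp (hT : IsNiveloid T) (hT' : IsNiveloid T') : IsNiveloid (T ∘ T') where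
  map_zero x := by
    rw [Function.comp_apply, show T' 0 = 0 from funext hT'.map_zero, hT.map_zero]
  le_add h₁ h₂ _ h := hT.le_add (hT'.map_isBUC h₁) (hT'.map_isBUC h₂) (hT'.le_add h₁ h₂ h)
  map_translate g a x := by
    rw [Function.comp_apply, funext (hT'.map_translate g a), hT.map_translate, Function.comp_apply]

theorem iterate (hT : IsNiveloid T) : ∀ k : ℕ, IsNiveloid T^[k]
  | 0 => .id
  | k + 1 => (hT.iterate k).comp hT

theorem iterate_le_iterate (hT : IsNiveloid T) (hT' : IsNiveloid T')
    (hle : ∀ g, IsBUC g → ∀ x, T g x ≤ T' g x) (h₁ : IsBUC g₁) (h₂ : IsBUC g₂)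
    (h : ∀ x, g₁ x ≤ g₂ x) (k : ℕ) (x : E) : T^[k] g₁ x ≤ T'^[k] g₂ x := by
  induction k generalizing x with
  | zero => exact h x
  | succ k ih =>
    have hk₁ := (hT.iterate k).map_isBUC h₁
    have hk₂ := (hT'.iterate k).map_isBUC h₂
    rw [Function.iterate_succ_apply', Function.iterate_succ_apply']
    exact (hT.mono hk₁ hk₂ ih x).trans (hle _ hk₂ x)

theorem bddBelow_range {ι : Type*} {T : ι → (E → ℝ) → E → ℝ} (hT : ∀ i, IsNiveloid (T i))
    (hg : IsBUC g) (x : E) : BddBelow (range fun i => T i g x) := by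
  obtain ⟨M, hM⟩ := hg.bounded
  exact ⟨-M, forall_mem_range.2 fun i => neg_le_of_abs_le ((hT i).abs_le hg hM x)⟩

theorem iInf {ι : Type*} [Nonempty ι] {T : ι → (E → ℝ) → E → ℝ} (hT : ∀ i, IsNiveloid (T i)) :
    IsNiveloid fun g x => ⨅ i, T i g x where
  map_zero x := by simp [(hT _).map_zero]
  le_add h₁ h₂ c h x := by
    rw [← sub_le_iff_le_add]
    refine le_ciInf fun i => ?_
    linarith [ciInf_le (bddBelow_range hT h₁ x) i, (hT i).le_add h₁ h₂ h x]
  map_translate g a x := by simp only [(hT _).map_translate]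

end IsNiveloid

end Niveloid

section DyadicGrid

/-- The mesh `2⁻ⁿ` of the dyadic grid of level `n`. -/
def dyadicStep (n : ℕ) : ℝ := ((2 : ℝ) ^ n)⁻¹

/-- The number `⌊2ⁿ t⌋` of full steps of length `2⁻ⁿ` in `[0, t]`. -/
def dyadicCount (n : ℕ) (t : ℝ) : ℕ := ⌊(2 : ℝ) ^ n * t⌋₊

/-- The length of the incomplete step that remains of `[0, t]` after `⌊2ⁿ t⌋` full steps. -/
def dyadicRest (n : ℕ) (t : ℝ) : ℝ := t - dyadicCount n t * dyadicStep n

theorem dyadicStep_pos (n : ℕ) : 0 < dyadicStep n := by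
  unfold dyadicStep; positivity

theorem dyadicStep_eq_two_mul (n : ℕ) : dyadicStep n = 2 * dyadicStep (n + 1) := by
  unfold dyadicStep; field_simp; ring

theorem two_pow_sub_mul_dyadicStep {m n : ℕ} (hmn : m ≤ n) :
    ((2 ^ (n - m) : ℕ) : ℝ) * dyadicStep n = dyadicStep m := by
  obtain ⟨j, rfl⟩ := Nat.exists_eq_add_of_le hmn
  simp only [dyadicStep, Nat.add_sub_cancel_left, pow_add, Nat.cast_pow, Nat.cast_ofNat]
  field_simp

theorem tendsto_dyadicStep : Tendsto dyadicStep atTop (𝓝[>] 0) := by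
  refine tendsto_nhdsWithin_iff.2 ⟨?_, .of_forall dyadicStep_pos⟩
  exact tendsto_inv_atTop_zero.comp (tendsto_pow_atTop_atTop_of_one_lt one_lt_two)

theorem dyadicCount_mul_add_dyadicRest (n : ℕ) (t : ℝ) :
    dyadicCount n t * dyadicStep n + dyadicRest n t = t := by
  unfold dyadicRest; ring

theorem dyadicRest_eq_fract_mul {t : ℝ} (ht : 0 ≤ t) (n : ℕ) :
    dyadicRest n t = Int.fract ((2 : ℝ) ^ n * t) * dyadicStep n := by
  have hcast : (dyadicCount n t : ℝ) = ⌊(2 : ℝ) ^ n * t⌋ :=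
    natCast_floor_eq_intCast_floor (by positivity)
  rw [dyadicRest, hcast, Int.fract, sub_mul, dyadicStep]
  field_simp

theorem dyadicRest_nonneg {t : ℝ} (ht : 0 ≤ t) (n : ℕ) : 0 ≤ dyadicRest n t := by
  rw [dyadicRest_eq_fract_mul ht]
  exact mul_nonneg (Int.fract_nonneg _) (dyadicStep_pos n).le

theorem dyadicRest_le {t : ℝ} (ht : 0 ≤ t) (n : ℕ) : dyadicRest n t ≤ dyadicStep n := by
  rw [dyadicRest_eq_fract_mul ht]
  exact mul_le_of_le_one_left (dyadicStep_pos n).le (Int.fract_lt_one _).le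

theorem tendsto_dyadicRest {t : ℝ} (ht : 0 ≤ t) :
    Tendsto (fun n => dyadicRest n t) atTop (𝓝[≥] 0) :=
  tendsto_nhdsWithin_iff.2 ⟨squeeze_zero (dyadicRest_nonneg ht) (dyadicRest_le ht)
    (tendsto_dyadicStep.mono_right nhdsWithin_le_nhds), .of_forall (dyadicRest_nonneg ht)⟩

theorem dyadicCount_zero (n : ℕ) : dyadicCount n 0 = 0 := by simp [dyadicCount]

theorem dyadicCount_mono (n : ℕ) : Monotone (dyadicCount n) := fun _ _ hst =>
  Nat.floor_mono (by gcongr)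

theorem dyadicCount_add_dyadicStep {m n : ℕ} (hmn : m ≤ n) {t : ℝ} (ht : 0 ≤ t) :
    dyadicCount n (t + dyadicStep m) = dyadicCount n t + 2 ^ (n - m) := by
  have harg : (2 : ℝ) ^ n * (t + dyadicStep m) = 2 ^ n * t + (2 ^ (n - m) : ℕ) := by
    rw [← two_pow_sub_mul_dyadicStep hmn, dyadicStep]
    field_simp
  rw [dyadicCount, harg, Nat.floor_add_natCast (by positivity), dyadicCount]

theorem dyadicRest_add_dyadicStep {m n : ℕ} (hmn : m ≤ n) {t : ℝ} (ht : 0 ≤ t) :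
    dyadicRest n (t + dyadicStep m) = dyadicRest n t := by
  rw [dyadicRest, dyadicCount_add_dyadicStep hmn ht, dyadicRest, ← two_pow_sub_mul_dyadicStep hmn]
  push_cast
  ring

theorem dyadicCount_succ {t : ℝ} (ht : 0 ≤ t) (n : ℕ) :
    dyadicCount (n + 1) t = 2 * dyadicCount n t ∨
      dyadicCount (n + 1) t = 2 * dyadicCount n t + 1 := by
  have harg : (2 : ℝ) ^ (n + 1) * t = 2 * (2 ^ n * t) := by ring
  have hle := Nat.floor_le (show 0 ≤ (2 : ℝ) ^ n * t by positivity)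
  have hlt := Nat.lt_floor_add_one ((2 : ℝ) ^ n * t)
  have hlower : 2 * dyadicCount n t ≤ dyadicCount (n + 1) t := by
    refine Nat.le_floor ?_
    push_cast [dyadicCount]
    linarith
  have hupper : dyadicCount (n + 1) t < 2 * dyadicCount n t + 2 := by
    refine (Nat.floor_lt (by positivity)).2 ?_
    push_cast [dyadicCount]
    linarith
  omega

end DyadicGrid

section DyadicIterate

variable {E : Type*} {f : E → ℝ} {S : ℝ → (E → ℝ) → E → ℝ}

/-- The composition `S(2⁻ⁿ) ∘ ⋯ ∘ S(2⁻ⁿ) ∘ S(t - k 2⁻ⁿ)` with `k = ⌊2ⁿ t⌋` factors `S(2⁻ⁿ)`. -/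
def dyadicIterate (S : ℝ → (E → ℝ) → E → ℝ) (n : ℕ) (t : ℝ) (f : E → ℝ) : E → ℝ :=
  (S (dyadicStep n))^[dyadicCount n t] (S (dyadicRest n t) f)

/-- The limit of the dyadic iterates, taken as an infimum because they decrease in `n` for
supermultiplicative families. -/
def dyadicLimit (S : ℝ → (E → ℝ) → E → ℝ) (t : ℝ) (f : E → ℝ) (x : E) : ℝ :=
  ⨅ n, dyadicIterate S n t f x

theorem dyadicIterate_add_dyadicStep {m n : ℕ} (hmn : m ≤ n) {t : ℝ} (ht : 0 ≤ t) :
    dyadicIterate S n (t + dyadicStep m) f =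
      (S (dyadicStep n))^[2 ^ (n - m)] (dyadicIterate S n t f) := by
  rw [dyadicIterate, dyadicCount_add_dyadicStep hmn ht, dyadicRest_add_dyadicStep hmn ht, add_comm,
    Function.iterate_add_apply, dyadicIterate]

end DyadicIterate

section DyadicLimit

variable {E : Type*} [NormedAddCommGroup E] {f g : E → ℝ} {S T : ℝ → (E → ℝ) → E → ℝ}

/-- A family of niveloids `(S t)_{t ≥ 0}` with `S s ∘ S t ≤ S (s + t)`: subdividing a time interval
decreases the composition, so dyadic refinements converge from above. -/
structure IsSupermultiplicative (S : ℝ → (E → ℝ) → E → ℝ) : Prop where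
  isNiveloid {t : ℝ} (ht : 0 ≤ t) : IsNiveloid (S t)
  comp_le {s t : ℝ} (hs : 0 ≤ s) (ht : 0 ≤ t) {g : E → ℝ} (hg : IsBUC g) (x : E) :
    S s (S t g) x ≤ S (s + t) g x

/-- A family of niveloids `(T t)_{t ≥ 0}` with `T (s + t) ≤ T s ∘ T t`. -/
structure IsSubmultiplicative (T : ℝ → (E → ℝ) → E → ℝ) : Prop where
  isNiveloid {t : ℝ} (ht : 0 ≤ t) : IsNiveloid (T t)
  le_comp {s t : ℝ} (hs : 0 ≤ s) (ht : 0 ≤ t) {g : E → ℝ} (hg : IsBUC g) (x : E) :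
    T (s + t) g x ≤ T s (T t g) x

/-- `T t ≤ S t` on bounded uniformly continuous functions, for all `t ≥ 0`. -/
def IsDominatedBy (T S : ℝ → (E → ℝ) → E → ℝ) : Prop :=
  ∀ ⦃t : ℝ⦄, 0 ≤ t → ∀ ⦃g : E → ℝ⦄, IsBUC g → ∀ x, T t g x ≤ S t g x

/-- `S t g → g` uniformly as `t → 0`. The filter `𝓝[≥] 0` includes `t = 0`, hence `S 0 g = g`. -/
def IsStronglyContinuous (S : ℝ → (E → ℝ) → E → ℝ) : Prop :=
  ∀ ⦃g : E → ℝ⦄, IsBUC g → TendstoUniformly (fun t => S t g) g (𝓝[≥] 0)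

theorem IsStronglyContinuous.eventually_abs_sub_le (hSc : IsStronglyContinuous S) (hg : IsBUC g)
    {ε : ℝ} (hε : 0 < ε) : ∀ᶠ t in 𝓝[≥] (0 : ℝ), ∀ x, |S t g x - g x| ≤ ε := by
  filter_upwards [Metric.tendstoUniformly_iff.1 (hSc hg) ε hε] with t ht x
  rw [← Real.dist_eq, dist_comm]
  exact (ht x).le

theorem IsStronglyContinuous.map_zero_time (hSc : IsStronglyContinuous S) (hg : IsBUC g) :
    S 0 g = g := by
  funext x
  refine eq_of_abs_sub_le_all fun ε hε => ?_
  exact (hSc.eventually_abs_sub_le hg hε).self_of_nhdsWithin self_mem_Ici x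

theorem IsSupermultiplicative.iterate_le (hS : IsSupermultiplicative S) {h r : ℝ} (hh : 0 ≤ h)
    (hr : 0 ≤ r) (hg : IsBUC g) (k : ℕ) (x : E) :
    (S h)^[k] (S r g) x ≤ S (k * h + r) g x := by
  induction k generalizing x with
  | zero => simp
  | succ k ih =>
    have htime : ((k + 1 : ℕ) : ℝ) * h + r = h + (k * h + r) := by push_cast; ring
    have hSr := (hS.isNiveloid hr).map_isBUC hg
    have hSk := (hS.isNiveloid (show 0 ≤ k * h + r by positivity)).map_isBUC hg
    rw [Function.iterate_succ_apply', htime]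
    calc S h ((S h)^[k] (S r g)) x
        ≤ S h (S (k * h + r) g) x := (hS.isNiveloid hh).mono
          (((hS.isNiveloid hh).iterate k).map_isBUC hSr) hSk ih x
      _ ≤ S (h + (k * h + r)) g x := hS.comp_le hh (by positivity) hg x

theorem IsSubmultiplicative.le_iterate (hT : IsSubmultiplicative T) (hS : IsSupermultiplicative S)
    (hTS : IsDominatedBy T S) {h r : ℝ} (hh : 0 ≤ h) (hr : 0 ≤ r) (hg : IsBUC g) (k : ℕ) (x : E) :
    T (k * h + r) g x ≤ (S h)^[k] (S r g) x := by
  induction k generalizing x with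
  | zero => simpa using hTS hr hg x
  | succ k ih =>
    have htime : ((k + 1 : ℕ) : ℝ) * h + r = h + (k * h + r) := by push_cast; ring
    have hTk := (hT.isNiveloid (show 0 ≤ k * h + r by positivity)).map_isBUC hg
    have hSk := ((hS.isNiveloid hh).iterate k).map_isBUC ((hS.isNiveloid hr).map_isBUC hg)
    rw [Function.iterate_succ_apply', htime]
    calc T (h + (k * h + r)) g x
        ≤ T h (T (k * h + r) g) x := hT.le_comp hh (by positivity) hg x
      _ ≤ S h (T (k * h + r) g) x := hTS hh hTk x
      _ ≤ S h ((S h)^[k] (S r g)) x := (hS.isNiveloid hh).mono hTk hSk ih x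

namespace IsSupermultiplicative

theorem isNiveloid_dyadicIterate (hS : IsSupermultiplicative S) {t : ℝ} (ht : 0 ≤ t) (n : ℕ) :
    IsNiveloid (dyadicIterate S n t) :=
  ((hS.isNiveloid (dyadicStep_pos n).le).iterate _).comp (hS.isNiveloid (dyadicRest_nonneg ht n))

theorem isNiveloid_dyadicLimit (hS : IsSupermultiplicative S) {t : ℝ} (ht : 0 ≤ t) :
    IsNiveloid (dyadicLimit S t) :=
  .iInf (hS.isNiveloid_dyadicIterate ht)

theorem dyadicIterate_le (hS : IsSupermultiplicative S) (hf : IsBUC f) {t : ℝ} (ht : 0 ≤ t)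
    (n : ℕ) (x : E) : dyadicIterate S n t f x ≤ S t f x := by
  simpa only [dyadicIterate, dyadicCount_mul_add_dyadicRest] using
    hS.iterate_le (dyadicStep_pos n).le (dyadicRest_nonneg ht n) hf (dyadicCount n t) x

theorem iterate_two_mul_dyadicStep_le (hS : IsSupermultiplicative S) {g₁ g₂ : E → ℝ}
    (h₁ : IsBUC g₁) (h₂ : IsBUC g₂) (h : ∀ x, g₁ x ≤ g₂ x) (n k : ℕ) (x : E) :
    (S (dyadicStep (n + 1)))^[2 * k] g₁ x ≤ (S (dyadicStep n))^[k] g₂ x := by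
  have hstep := (dyadicStep_pos (n + 1)).le
  rw [Function.iterate_mul]
  refine ((hS.isNiveloid hstep).iterate 2).iterate_le_iterate
    (hS.isNiveloid (dyadicStep_pos n).le) (fun g hg y => ?_) h₁ h₂ h k x
  rw [dyadicStep_eq_two_mul n, two_mul]
  exact hS.comp_le hstep hstep hg y

theorem dyadicIterate_succ_le (hS : IsSupermultiplicative S) (hf : IsBUC f) {t : ℝ} (ht : 0 ≤ t)
    (n : ℕ) (x : E) : dyadicIterate S (n + 1) t f x ≤ dyadicIterate S n t f x := by
  have hrest := dyadicRest_nonneg ht n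
  have hrest' := dyadicRest_nonneg ht (n + 1)
  have hstep' := (dyadicStep_pos (n + 1)).le
  have hSr := (hS.isNiveloid hrest).map_isBUC hf
  have hSr' := (hS.isNiveloid hrest').map_isBUC hf
  have hstep := dyadicStep_eq_two_mul n
  unfold dyadicIterate
  rcases dyadicCount_succ ht n with heven | hodd
  · have hsame : dyadicRest (n + 1) t = dyadicRest n t := by
      rw [dyadicRest, dyadicRest, heven, hstep]; push_cast; ring
    rw [heven, hsame]
    exact hS.iterate_two_mul_dyadicStep_le hSr hSr (fun _ => le_rfl) n _ x
  · have hsplit : dyadicRest n t = dyadicStep (n + 1) + dyadicRest (n + 1) t := by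
      rw [dyadicRest, dyadicRest, hodd, hstep]; push_cast; ring
    rw [hodd, Function.iterate_succ_apply]
    refine hS.iterate_two_mul_dyadicStep_le ((hS.isNiveloid hstep').map_isBUC hSr') hSr
      (fun y => ?_) n _ x
    rw [hsplit]
    exact hS.comp_le hstep' hrest' hf y

theorem antitone_dyadicIterate (hS : IsSupermultiplicative S) (hf : IsBUC f) {t : ℝ}
    (ht : 0 ≤ t) : Antitone fun n => dyadicIterate S n t f :=
  antitone_nat_of_succ_le fun n x => hS.dyadicIterate_succ_le hf ht n x

theorem dyadicLimit_le_dyadicIterate (hS : IsSupermultiplicative S) (hf : IsBUC f) {t : ℝ}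
    (ht : 0 ≤ t) (n : ℕ) (x : E) : dyadicLimit S t f x ≤ dyadicIterate S n t f x :=
  ciInf_le (IsNiveloid.bddBelow_range (hS.isNiveloid_dyadicIterate ht) hf x) n

theorem tendsto_dyadicIterate (hS : IsSupermultiplicative S) (hf : IsBUC f) {t : ℝ} (ht : 0 ≤ t)
    (x : E) : Tendsto (fun n => dyadicIterate S n t f x) atTop (𝓝 (dyadicLimit S t f x)) :=
  tendsto_atTop_ciInf (fun _ _ hmn => hS.antitone_dyadicIterate hf ht hmn x)
    (IsNiveloid.bddBelow_range (hS.isNiveloid_dyadicIterate ht) hf x)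

theorem dyadicLimit_le (hS : IsSupermultiplicative S) (hf : IsBUC f) {t : ℝ} (ht : 0 ≤ t) (x : E) :
    dyadicLimit S t f x ≤ S t f x :=
  (hS.dyadicLimit_le_dyadicIterate hf ht 0 x).trans (hS.dyadicIterate_le hf ht 0 x)

theorem le_dyadicLimit (hS : IsSupermultiplicative S) (hT : IsSubmultiplicative T)
    (hTS : IsDominatedBy T S) (hf : IsBUC f) {t : ℝ} (ht : 0 ≤ t) (x : E) :
    T t f x ≤ dyadicLimit S t f x :=
  le_ciInf fun n => by
    simpa only [dyadicIterate, dyadicCount_mul_add_dyadicRest] using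
      hT.le_iterate hS hTS (dyadicStep_pos n).le (dyadicRest_nonneg ht n) hf (dyadicCount n t) x

end IsSupermultiplicative

theorem IsStronglyContinuous.dyadicLimit_zero_time (hSc : IsStronglyContinuous S) (hf : IsBUC f) :
    dyadicLimit S 0 f = f := by
  funext x
  simp [dyadicLimit, dyadicIterate, dyadicRest, dyadicCount_zero, hSc.map_zero_time hf]

namespace IsSupermultiplicative

theorem iterate_dyadicStep_le (hS : IsSupermultiplicative S) (hSc : IsStronglyContinuous S)
    (hg : IsBUC g) (n k : ℕ) (x : E) :
    (S (dyadicStep n))^[k] g x ≤ S (k * dyadicStep n) g x := by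
  simpa only [hSc.map_zero_time hg, add_zero] using
    hS.iterate_le (dyadicStep_pos n).le le_rfl hg k x

theorem le_iterate_dyadicStep (hS : IsSupermultiplicative S) (hSc : IsStronglyContinuous S)
    (hT : IsSubmultiplicative T) (hTS : IsDominatedBy T S) (hg : IsBUC g) (n k : ℕ) (x : E) :
    T (k * dyadicStep n) g x ≤ (S (dyadicStep n))^[k] g x := by
  simpa only [hSc.map_zero_time hg, add_zero] using
    hT.le_iterate hS hTS (dyadicStep_pos n).le le_rfl hg k x

theorem le_dyadicLimit_add_dyadicStep (hS : IsSupermultiplicative S)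
    (hSc : IsStronglyContinuous S) (hT : IsSubmultiplicative T) (hTS : IsDominatedBy T S)
    (hf : IsBUC f) {t : ℝ} (ht : 0 ≤ t) (m : ℕ) (x : E) :
    T (dyadicStep m) (dyadicLimit S t f) x ≤ dyadicLimit S (t + dyadicStep m) f x := by
  have hstep := (dyadicStep_pos m).le
  refine ge_of_tendsto (hS.tendsto_dyadicIterate hf (add_nonneg ht hstep) x) ?_
  filter_upwards [eventually_ge_atTop m] with n hmn
  have hiter := (hS.isNiveloid_dyadicIterate ht n).map_isBUC hf
  calc T (dyadicStep m) (dyadicLimit S t f) x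
      ≤ T (dyadicStep m) (dyadicIterate S n t f) x :=
        (hT.isNiveloid hstep).mono ((hS.isNiveloid_dyadicLimit ht).map_isBUC hf) hiter
          (hS.dyadicLimit_le_dyadicIterate hf ht n) x
    _ ≤ dyadicIterate S n (t + dyadicStep m) f x := by
        rw [dyadicIterate_add_dyadicStep hmn ht, ← two_pow_sub_mul_dyadicStep hmn]
        exact hS.le_iterate_dyadicStep hSc hT hTS hiter n _ x

theorem dyadicLimit_add_dyadicStep_le (hS : IsSupermultiplicative S)
    (hSc : IsStronglyContinuous S) (hf : IsBUC f) {t : ℝ} (ht : 0 ≤ t)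
    (hunif : TendstoUniformly (fun n => dyadicIterate S n t f) (dyadicLimit S t f) atTop)
    (m : ℕ) (x : E) :
    dyadicLimit S (t + dyadicStep m) f x ≤ S (dyadicStep m) (dyadicLimit S t f) x := by
  have hstep := (dyadicStep_pos m).le
  refine le_of_forall_pos_le_add fun ε hε => ?_
  obtain ⟨n, hn, hmn⟩ := ((Metric.tendstoUniformly_iff.1 hunif ε hε).and
    (eventually_ge_atTop m)).exists
  have hiter := (hS.isNiveloid_dyadicIterate ht n).map_isBUC hf
  calc dyadicLimit S (t + dyadicStep m) f x
      ≤ dyadicIterate S n (t + dyadicStep m) f x :=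
        hS.dyadicLimit_le_dyadicIterate hf (add_nonneg ht hstep) n x
    _ ≤ S (dyadicStep m) (dyadicIterate S n t f) x := by
        rw [dyadicIterate_add_dyadicStep hmn ht, ← two_pow_sub_mul_dyadicStep hmn]
        exact hS.iterate_dyadicStep_le hSc hiter n _ x
    _ ≤ S (dyadicStep m) (dyadicLimit S t f) x + ε :=
        (hS.isNiveloid hstep).le_add hiter ((hS.isNiveloid_dyadicLimit ht).map_isBUC hf)
          (fun y => by linarith [(abs_lt.1 (hn y)).1]) x

end IsSupermultiplicative

end DyadicLimit

section Dini

theorem tendstoUniformly_of_antitone_of_zero_at_infty {X : Type*} [TopologicalSpace X]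
    {F : ℕ → X → ℝ} {G : X → ℝ} (hF : ∀ n, Continuous (F n)) (hG : Continuous G)
    (hanti : Antitone F) (hlim : ∀ x, Tendsto (fun n => F n x) atTop (𝓝 (G x)))
    (hF₀ : Tendsto (F 0) (cocompact X) (𝓝 0)) (hG₀ : Tendsto G (cocompact X) (𝓝 0)) :
    TendstoUniformly F G atTop := by
  refine Metric.tendstoUniformly_iff.2 fun ε hε => ?_
  have hle : ∀ n x, G x ≤ F n x := fun n x =>
    Antitone.le_of_tendsto (fun _ _ hmn => hanti hmn x) (hlim x) n
  have houtside : ∀ᶠ x in cocompact X, F 0 x - G x < ε :=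
    (hF₀.sub hG₀).eventually_lt_const (by simpa using hε)
  obtain ⟨K, hK, hKε⟩ := mem_cocompact.1 houtside
  have hinside : TendstoUniformlyOn F G atTop K :=
    Antitone.tendstoUniformlyOn_of_forall_tendsto hK (fun n => (hF n).continuousOn)
      (fun x _ _ _ hmn => hanti hmn x) hG.continuousOn fun x _ => hlim x
  filter_upwards [Metric.tendstoUniformlyOn_iff.1 hinside ε hε] with n hn x
  by_cases hx : x ∈ K
  · exact hn x hx
  · have hεx : F 0 x - G x < ε := hKε hx
    rw [Real.dist_eq, abs_sub_comm, abs_of_nonneg (sub_nonneg.2 (hle n x))]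
    linarith [hanti n.zero_le x]

end Dini

section DyadicLimitRegularity

variable {E : Type*} [NormedAddCommGroup E] {f : E → ℝ} {S T : ℝ → (E → ℝ) → E → ℝ} {t : ℝ}

namespace IsSupermultiplicative

theorem tendsto_dyadicLimit_cocompact (hS : IsSupermultiplicative S) (hT : IsSubmultiplicative T)
    (hTS : IsDominatedBy T S) (hf : IsBUC f) (ht : 0 ≤ t)
    (hSf : Tendsto (S t f) (cocompact E) (𝓝 0)) (hTf : Tendsto (T t f) (cocompact E) (𝓝 0)) :
    Tendsto (dyadicLimit S t f) (cocompact E) (𝓝 0) :=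
  tendsto_of_tendsto_of_tendsto_of_le_of_le hTf hSf (hS.le_dyadicLimit hT hTS hf ht)
    (hS.dyadicLimit_le hf ht)

theorem tendstoUniformly_dyadicIterate (hS : IsSupermultiplicative S)
    (hT : IsSubmultiplicative T) (hTS : IsDominatedBy T S) (hf : IsBUC f) (ht : 0 ≤ t)
    (hSf : Tendsto (S t f) (cocompact E) (𝓝 0)) (hTf : Tendsto (T t f) (cocompact E) (𝓝 0)) :
    TendstoUniformly (fun n => dyadicIterate S n t f) (dyadicLimit S t f) atTop := by
  have hlim₀ := hS.tendsto_dyadicLimit_cocompact hT hTS hf ht hSf hTf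
  refine tendstoUniformly_of_antitone_of_zero_at_infty
    (fun n => ((hS.isNiveloid_dyadicIterate ht n).map_isBUC hf).uniformContinuous.continuous)
    ((hS.isNiveloid_dyadicLimit ht).map_isBUC hf).uniformContinuous.continuous
    (hS.antitone_dyadicIterate hf ht) (hS.tendsto_dyadicIterate hf ht) ?_ hlim₀
  exact tendsto_of_tendsto_of_tendsto_of_le_of_le hlim₀ hSf
    (hS.dyadicLimit_le_dyadicIterate hf ht 0) (hS.dyadicIterate_le hf ht 0)

theorem tendsto_iterate_dyadicStep (hS : IsSupermultiplicative S) (hSc : IsStronglyContinuous S)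
    (hf : IsBUC f) (ht : 0 ≤ t) (x : E) :
    Tendsto (fun n => (S (dyadicStep n))^[dyadicCount n t] f x) atTop
      (𝓝 (dyadicLimit S t f x)) := by
  refine (hS.tendsto_dyadicIterate hf ht x).congr_dist (Metric.tendsto_nhds.2 fun ε hε => ?_)
  filter_upwards [(tendsto_dyadicRest ht).eventually
    (hSc.eventually_abs_sub_le hf (half_pos hε))] with n hn
  have hdist := ((hS.isNiveloid (dyadicStep_pos n).le).iterate (dyadicCount n t)).abs_sub_le
    ((hS.isNiveloid (dyadicRest_nonneg ht n)).map_isBUC hf) hf hn x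
  rw [dist_zero_right, Real.norm_of_nonneg dist_nonneg, Real.dist_eq]
  exact hdist.trans_lt (half_lt_self hε)

theorem exists_abs_iterate_dyadicStep_sub_le (hS : IsSupermultiplicative S)
    (hSc : IsStronglyContinuous S) (hT : IsSubmultiplicative T) (hTc : IsStronglyContinuous T)
    (hTS : IsDominatedBy T S) (hf : IsBUC f) {ε : ℝ} (hε : 0 < ε) :
    ∃ r > 0, ∀ n k : ℕ, k * dyadicStep n < r → ∀ x, |(S (dyadicStep n))^[k] f x - f x| ≤ ε := by
  obtain ⟨r, hr, hrε⟩ := mem_nhdsGE_iff_exists_Ico_subset.1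
    ((hSc.eventually_abs_sub_le hf hε).and (hTc.eventually_abs_sub_le hf hε))
  refine ⟨r, hr, fun n k hk x => ?_⟩
  obtain ⟨hSε, hTε⟩ := hrε ⟨mul_nonneg k.cast_nonneg (dyadicStep_pos n).le, hk⟩
  have hle := hS.iterate_dyadicStep_le hSc hf n k x
  have hge := hS.le_iterate_dyadicStep hSc hT hTS hf n k x
  exact abs_le.2 ⟨by linarith [(abs_le.1 (hTε x)).1], by linarith [(abs_le.1 (hSε x)).2]⟩

theorem exists_abs_dyadicLimit_sub_le (hS : IsSupermultiplicative S)
    (hSc : IsStronglyContinuous S) (hT : IsSubmultiplicative T) (hTc : IsStronglyContinuous T)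
    (hTS : IsDominatedBy T S) (hf : IsBUC f) {ε : ℝ} (hε : 0 < ε) :
    ∃ r > 0, ∀ s t, 0 ≤ s → s ≤ t → t - s < r →
      ∀ x, |dyadicLimit S t f x - dyadicLimit S s f x| ≤ ε := by
  obtain ⟨r, hr, hrε⟩ := hS.exists_abs_iterate_dyadicStep_sub_le hSc hT hTc hTS hf hε
  refine ⟨r, hr, fun s t hs hst htsr x => ?_⟩
  have ht := hs.trans hst
  refine le_of_tendsto ((hS.tendsto_iterate_dyadicStep hSc hf ht x).sub
    (hS.tendsto_iterate_dyadicStep hSc hf hs x)).abs ?_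
  filter_upwards [(tendsto_dyadicStep.mono_right nhdsWithin_le_nhds).eventually_lt_const
    (sub_pos.2 htsr)] with n hn
  obtain ⟨k, hk⟩ := Nat.exists_eq_add_of_le (dyadicCount_mono n hst)
  have hkr : k * dyadicStep n < r := by
    have hs_split := dyadicCount_mul_add_dyadicRest n s
    have ht_split := dyadicCount_mul_add_dyadicRest n t
    rw [hk] at ht_split
    push_cast at ht_split
    linarith [dyadicRest_le hs n, dyadicRest_nonneg ht n]
  have hSn := hS.isNiveloid (dyadicStep_pos n).le
  rw [hk, Function.iterate_add_apply]
  exact (hSn.iterate _).abs_sub_le ((hSn.iterate k).map_isBUC hf) hf (hrε n k hkr) x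

end IsSupermultiplicative

end DyadicLimitRegularity

section UpperExpectation

variable {E : Type*} [NormedAddCommGroup E] [MeasurableSpace E]

/-- The upper expectation `sup_{ν ∈ A} ∫ g (x + y) ν(dy)` over a set `A` of laws of the
displacement `y`. -/
def upperExpectation (A : Set (Measure E)) (g : E → ℝ) (x : E) : ℝ :=
  sSup ((fun ν => ∫ y, g (x + y) ∂ν) '' A)

theorem upperExpectation_singleton (ν : Measure E) (g : E → ℝ) (x : E) :
    upperExpectation {ν} g x = ∫ y, g (x + y) ∂ν := by
  simp [upperExpectation]

theorem upperExpectation_le {A : Set (Measure E)} (hA : A.Nonempty) {g : E → ℝ} {x : E} {c : ℝ}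
    (h : ∀ ν ∈ A, ∫ y, g (x + y) ∂ν ≤ c) : upperExpectation A g x ≤ c :=
  csSup_le (hA.image _) (forall_mem_image.2 h)

theorem exists_upperExpectation_lt_add {A : Set (Measure E)} (hA : A.Nonempty) (g : E → ℝ) (x : E)
    {ε : ℝ} (hε : 0 < ε) : ∃ ν ∈ A, upperExpectation A g x < ∫ y, g (x + y) ∂ν + ε := by
  obtain ⟨-, ⟨ν, hν, rfl⟩, hlt⟩ := exists_lt_of_lt_csSup (hA.image _)
    (sub_lt_self (upperExpectation A g x) hε)
  exact ⟨ν, hν, sub_lt_iff_lt_add.1 hlt⟩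

variable [BorelSpace E] {A B : Set (Measure E)} {g g₁ g₂ : E → ℝ}

theorem IsBUC.integrable_translate (hg : IsBUC g) (ν : Measure E) [IsFiniteMeasure ν] (x : E) :
    Integrable (fun y => g (x + y)) ν := by
  obtain ⟨M, hM⟩ := hg.bounded
  have hcont := hg.uniformContinuous.continuous.comp (continuous_const_add x)
  exact .of_bound hcont.aestronglyMeasurable M (ae_of_all _ fun y => hM _)

theorem integral_translate_le_add (h₁ : IsBUC g₁) (h₂ : IsBUC g₂) {c : ℝ}
    (h : ∀ x, g₁ x ≤ g₂ x + c) (ν : Measure E) [IsProbabilityMeasure ν] (x : E) :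
    ∫ y, g₁ (x + y) ∂ν ≤ ∫ y, g₂ (x + y) ∂ν + c :=
  calc ∫ y, g₁ (x + y) ∂ν
      ≤ ∫ y, (g₂ (x + y) + c) ∂ν := integral_mono (h₁.integrable_translate ν x)
        ((h₂.integrable_translate ν x).add (integrable_const c)) fun y => h (x + y)
    _ = ∫ y, g₂ (x + y) ∂ν + c := by
        rw [integral_add (h₂.integrable_translate ν x) (integrable_const c)]; simp

theorem integral_le_upperExpectation (hA : ∀ ν ∈ A, IsProbabilityMeasure ν) (hg : IsBUC g)
    {ν : Measure E} (hν : ν ∈ A) (x : E) : ∫ y, g (x + y) ∂ν ≤ upperExpectation A g x := by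
  obtain ⟨M, hM⟩ := hg.bounded
  refine le_csSup ⟨M, forall_mem_image.2 fun ν hν => ?_⟩ (mem_image_of_mem _ hν)
  have := hA ν hν
  simpa using integral_translate_le_add hg .zero (c := M)
    (fun x => by simpa using (abs_le.1 (hM x)).2) ν x

theorem abs_upperExpectation_sub_le (hA : ∀ ν ∈ A, IsProbabilityMeasure ν) (hne : A.Nonempty)
    (hg : IsBUC g) {x : E} {b c : ℝ} (h : ∀ ν ∈ A, |∫ y, g (x + y) ∂ν - b| ≤ c) :
    |upperExpectation A g x - b| ≤ c := by
  obtain ⟨ν, hν⟩ := hne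
  have hge := integral_le_upperExpectation hA hg hν x
  have hle : upperExpectation A g x ≤ b + c :=
    upperExpectation_le ⟨ν, hν⟩ fun ν hν => by linarith [(abs_le.1 (h ν hν)).2]
  exact abs_le.2 ⟨by linarith [(abs_le.1 (h ν hν)).1], by linarith⟩

theorem isNiveloid_upperExpectation (hA : ∀ ν ∈ A, IsProbabilityMeasure ν) (hne : A.Nonempty) :
    IsNiveloid (upperExpectation A) where
  map_zero x := by simp [upperExpectation, hne.image_const]
  le_add h₁ h₂ c h x := upperExpectation_le hne fun ν hν => by
    have := hA ν hν
    linarith [integral_translate_le_add h₁ h₂ h ν x, integral_le_upperExpectation hA h₂ hν x]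
  map_translate g a x := by simp only [upperExpectation, add_right_comm x _ a]

theorem abs_integral_le_add_mul_measureReal {α : Type*} [MeasurableSpace α] {ν : Measure α}
    [IsProbabilityMeasure ν] {F : α → ℝ} {s : Set α} (hs : MeasurableSet s) {a b : ℝ}
    (ha : 0 ≤ a) (hin : ∀ y ∉ s, |F y| ≤ a) (hout : ∀ y, |F y| ≤ b) :
    |∫ y, F y ∂ν| ≤ a + b * ν.real s := by
  have hint : Integrable (s.indicator fun _ => b) ν := (integrable_const b).indicator hs
  calc |∫ y, F y ∂ν| ≤ ∫ y, (a + s.indicator (fun _ => b) y) ∂ν := by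
        refine norm_integral_le_of_norm_le (f := F) ((integrable_const a).add hint)
          (ae_of_all _ fun y => ?_)
        by_cases hy : y ∈ s
        · simpa [hy] using (hout y).trans (le_add_of_nonneg_left ha)
        · simpa [hy] using hin y hy
    _ = a + b * ν.real s := by
        rw [integral_add (integrable_const a) hint, integral_indicator_const b hs]
        simp [mul_comm]

theorem tendsto_upperExpectation_cocompact (hA : ∀ ν ∈ A, IsProbabilityMeasure ν)
    (hne : A.Nonempty) (htight : IsTightMeasureSet A) (hg : IsBUC g)
    (hg₀ : Tendsto g (cocompact E) (𝓝 0)) :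
    Tendsto (upperExpectation A g) (cocompact E) (𝓝 0) := by
  refine Metric.tendsto_nhds.2 fun ε hε => ?_
  obtain ⟨M, hM⟩ := hg.bounded
  have hMpos : 0 < |M| + 1 := by positivity
  obtain ⟨K, hK, hKε⟩ := isTightMeasureSet_iff_exists_isCompact_measure_compl_le.1 htight
    (ENNReal.ofReal (ε / 3 / (|M| + 1))) (by simpa using by positivity)
  obtain ⟨L, hL, hLε⟩ := mem_cocompact.1 (Metric.tendsto_nhds.1 hg₀ (ε / 3) (by positivity))
  refine mem_cocompact.2 ⟨_, (hL.prod hK).image continuous_sub, fun x hx => ?_⟩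
  have hfar : ∀ y ∉ Kᶜ, |g (x + y)| ≤ ε / 3 := fun y hy => by
    have hxy : x + y ∈ Lᶜ := fun hxyL =>
      hx ⟨(x + y, y), ⟨hxyL, notMem_compl_iff.1 hy⟩, add_sub_cancel_right x y⟩
    have hg_xy : dist (g (x + y)) 0 < ε / 3 := hLε hxy
    simpa using hg_xy.le
  have hbound : |upperExpectation A g x - 0| ≤ ε / 3 + ε / 3 := by
    refine abs_upperExpectation_sub_le hA hne hg fun ν hν => ?_
    have := hA ν hν
    have htail : ν.real Kᶜ ≤ ε / 3 / (|M| + 1) :=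
      ENNReal.toReal_le_of_le_ofReal (by positivity) (hKε ν hν)
    rw [sub_zero]
    calc |∫ y, g (x + y) ∂ν|
        ≤ ε / 3 + (|M| + 1) * ν.real Kᶜ := abs_integral_le_add_mul_measureReal
          hK.isClosed.measurableSet.compl (by positivity) hfar
          fun y => (hM _).trans ((le_abs_self M).trans (by linarith))
      _ ≤ ε / 3 + (|M| + 1) * (ε / 3 / (|M| + 1)) := by gcongr
      _ = ε / 3 + ε / 3 := by rw [mul_div_cancel₀ _ hMpos.ne']
  exact hbound.trans_lt (by linarith)

/-- The laws in `A i` concentrate at the origin along `l`, uniformly in each `A i`. -/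
def ConcentratesAtZero {ι : Type*} (A : ι → Set (Measure E)) (l : Filter ι) : Prop :=
  ∀ r > 0, ∀ ε > 0, ∀ᶠ i in l, ∀ ν ∈ A i, ν.real {y | r ≤ ‖y‖} ≤ ε

theorem ConcentratesAtZero.eventually_abs_integral_sub_le {ι : Type*} {A : ι → Set (Measure E)}
    {l : Filter ι} (hconc : ConcentratesAtZero A l)
    (hA : ∀ᶠ i in l, ∀ ν ∈ A i, IsProbabilityMeasure ν) (hg : IsBUC g) {ε : ℝ} (hε : 0 < ε) :
    ∀ᶠ i in l, ∀ ν ∈ A i, ∀ x, |∫ y, g (x + y) ∂ν - g x| ≤ ε := by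
  obtain ⟨M, hM⟩ := hg.bounded
  have hMpos : 0 < 2 * |M| + 1 := by positivity
  obtain ⟨r, hr, hgr⟩ := Metric.uniformContinuous_iff.1 hg.uniformContinuous (ε / 2) (half_pos hε)
  filter_upwards [hA, hconc r hr (ε / 2 / (2 * |M| + 1)) (by positivity)] with i hprob htail ν hν x
  have := hprob ν hν
  have hnear : ∀ y ∉ {y : E | r ≤ ‖y‖}, |g (x + y) - g x| ≤ ε / 2 := fun y hy =>
    (hgr (a := x + y) (b := x) (by simpa using hy)).le
  have hfar : ∀ y, |g (x + y) - g x| ≤ 2 * |M| + 1 := fun y => by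
    linarith [abs_sub (g (x + y)) (g x), hM (x + y), hM x, le_abs_self M]
  have hcenter : ∫ y, g (x + y) ∂ν - g x = ∫ y, (g (x + y) - g x) ∂ν := by
    rw [integral_sub (hg.integrable_translate ν x) (integrable_const _)]; simp
  calc |∫ y, g (x + y) ∂ν - g x|
      ≤ ε / 2 + (2 * |M| + 1) * ν.real {y | r ≤ ‖y‖} := by
        rw [hcenter]
        exact abs_integral_le_add_mul_measureReal
          (measurableSet_le measurable_const continuous_norm.measurable) (half_pos hε).le hnear hfar
    _ ≤ ε / 2 + (2 * |M| + 1) * (ε / 2 / (2 * |M| + 1)) := by gcongr; exact htail ν hν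
    _ = ε := by rw [mul_div_cancel₀ _ hMpos.ne', add_halves]

theorem ConcentratesAtZero.isStronglyContinuous {A : ℝ → Set (Measure E)}
    (hconc : ConcentratesAtZero A (𝓝[≥] 0)) (hA : ∀ t ≥ 0, ∀ ν ∈ A t, IsProbabilityMeasure ν)
    (hne : ∀ t ≥ 0, (A t).Nonempty) : IsStronglyContinuous fun t => upperExpectation (A t) := by
  refine fun g hg => Metric.tendstoUniformly_iff.2 fun ε hε => ?_
  have hnonneg : ∀ᶠ t : ℝ in 𝓝[≥] 0, 0 ≤ t := self_mem_nhdsWithin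
  filter_upwards [hnonneg, hconc.eventually_abs_integral_sub_le (hnonneg.mono hA) hg
    (half_pos hε)] with t ht hclose x
  rw [dist_comm, Real.dist_eq]
  exact (abs_upperExpectation_sub_le (hA t ht) (hne t ht) hg fun ν hν => hclose ν hν x).trans_lt
    (half_lt_self hε)

end UpperExpectation

section KernelConvolution

open ProbabilityTheory

variable {E : Type*} [NormedAddCommGroup E] [MeasurableSpace E] [BorelSpace E]
  [SecondCountableTopology E] {A B C : Set (Measure E)} {g : E → ℝ}

/-- The law of `Y + Z` when `Y` has law `ν` and, conditionally on `Y = y`, `Z` has law `κ y`. -/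
def kernelConv (ν : Measure E) (κ : Kernel E E) : Measure E :=
  (ν ⊗ₘ κ).map fun q => q.1 + q.2

theorem IsBUC.integrable_compProd (hg : IsBUC g) (ν : Measure E) [IsProbabilityMeasure ν]
    (κ : Kernel E E) [IsMarkovKernel κ] (x : E) :
    Integrable (fun q : E × E => g (x + q.1 + q.2)) (ν ⊗ₘ κ) := by
  obtain ⟨M, hM⟩ := hg.bounded
  have hcont := hg.uniformContinuous.continuous
  exact .of_bound (by fun_prop) M (ae_of_all _ fun y => hM _)

theorem IsBUC.integral_kernelConv (hg : IsBUC g) (ν : Measure E) [IsProbabilityMeasure ν]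
    (κ : Kernel E E) [IsMarkovKernel κ] (x : E) :
    ∫ y, g (x + y) ∂kernelConv ν κ = ∫ y, ∫ z, g (x + y + z) ∂κ y ∂ν := by
  have hcont := hg.uniformContinuous.continuous
  rw [kernelConv, integral_map (by fun_prop) (by fun_prop)]
  simp only [← add_assoc]
  exact Measure.integral_compProd (hg.integrable_compProd ν κ x)

theorem exists_measurable_selection_upperExpectation (hB : ∀ ν ∈ B, IsProbabilityMeasure ν)
    (hne : B.Nonempty) (hg : IsBUC g) {ε : ℝ} (hε : 0 < ε) :
    ∃ (N : ℕ → Measure E) (i : E → ℕ), (∀ n, N n ∈ B) ∧ Measurable i ∧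
      ∀ y, upperExpectation B g y ≤ ∫ z, g (y + z) ∂N (i y) + ε := by
  classical
  obtain ⟨r, hr, hgr⟩ := hg.exists_modulus (show 0 < ε / 3 by positivity)
  let D := TopologicalSpace.denseSeq E
  have hD : ∀ y, ∃ n, dist y (D n) < r := fun y =>
    (TopologicalSpace.denseRange_denseSeq E).exists_dist_lt y hr
  choose N hN hNopt using fun n =>
    exists_upperExpectation_lt_add hne g (D n) (show 0 < ε / 3 by positivity)
  refine ⟨N, fun y => Nat.find (hD y), hN, measurable_find hD fun n =>
    measurableSet_lt (by fun_prop) (by fun_prop), fun y => ?_⟩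
  set n := Nat.find (hD y)
  have hyn : ‖y - D n‖ < r := dist_eq_norm y (D n) ▸ Nat.find_spec (hD y)
  have := hB (N n) (hN n)
  have hfrom := (isNiveloid_upperExpectation hB hne).map_add_le hg (hgr _ hyn) (D n)
  have hto := integral_translate_le_add (hg.comp_add_right (D n - y)) hg
    (hgr (D n - y) (by rwa [norm_sub_rev])) (N n) y
  simp only [add_right_comm y _ (D n - y), add_sub_cancel] at hfrom hto
  linarith [hNopt n]

theorem upperExpectation_upperExpectation_le (hA : ∀ ν ∈ A, IsProbabilityMeasure ν)
    (hAne : A.Nonempty) (hB : ∀ ν ∈ B, IsProbabilityMeasure ν) (hBne : B.Nonempty)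
    (hC : ∀ ν ∈ C, IsProbabilityMeasure ν)
    (hABC : ∀ ν ∈ A, ∀ N : ℕ → Measure E, (∀ n, N n ∈ B) → ∀ (i : E → ℕ) (hi : Measurable i),
      kernelConv ν ((Kernel.ofFunOfCountable N).comap i hi) ∈ C)
    (hg : IsBUC g) (x : E) :
    upperExpectation A (upperExpectation B g) x ≤ upperExpectation C g x := by
  refine upperExpectation_le hAne fun ν hν => le_of_forall_pos_le_add fun ε hε => ?_
  have := hA ν hν
  obtain ⟨N, i, hN, hi, hsel⟩ := exists_measurable_selection_upperExpectation hB hBne hg hε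
  have hix : Measurable fun y => i (x + y) := hi.comp (measurable_const_add x)
  let κ : Kernel E E := (Kernel.ofFunOfCountable N).comap (fun y => i (x + y)) hix
  have : IsMarkovKernel κ := ⟨fun y => hB _ (hN (i (x + y)))⟩
  have hinner : Integrable (fun y => ∫ z, g (x + y + z) ∂κ y) ν :=
    Integrable.integral_compProd (a := ()) (κ := Kernel.const Unit ν)
      (η := Kernel.prodMkLeft Unit κ) (hg.integrable_compProd ν κ x)
  calc ∫ y, upperExpectation B g (x + y) ∂ν
      ≤ ∫ y, (∫ z, g (x + y + z) ∂κ y + ε) ∂ν := integral_mono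
        (((isNiveloid_upperExpectation hB hBne).map_isBUC hg).integrable_translate ν x)
        (hinner.add (integrable_const ε)) fun y => hsel (x + y)
    _ = ∫ y, g (x + y) ∂kernelConv ν κ + ε := by
        rw [integral_add hinner (integrable_const ε), hg.integral_kernelConv]; simp
    _ ≤ upperExpectation C g x + ε := by
        gcongr
        exact integral_le_upperExpectation hC hg (hABC ν hν N hN _ hix) x

end KernelConvolution

section Wasserstein

variable {d : ℕ} {p : ℝ} {μ ν : Measure (Ed d)} {γ : Measure (Ed d × Ed d)}

/-- The `L^p` norm `(∫ |y|^p μ(dy))^{1/p}` of the identity. -/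
def momentNorm (p : ℝ) (μ : Measure (Ed d)) : ℝ≥0∞ :=
  eLpNorm (fun y : Ed d => y) (ENNReal.ofReal p) μ

/-- The `p`-cost `(∫ |y - x|^p γ(dx, dy))^{1/p}` of a transport plan `γ`. -/
def transportCost (p : ℝ) (γ : Measure (Ed d × Ed d)) : ℝ≥0∞ :=
  eLpNorm (fun q : Ed d × Ed d => q.2 - q.1) (ENNReal.ofReal p) γ

/-- The closed ball of radius `r` around `μ` in `𝒫_p(ℝ^d)` for the distance `𝒲_p`. -/
def wassersteinBall (p : ℝ) (μ : Measure (Ed d)) (r : ℝ) : Set (Measure (Ed d)) :=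
  {ν | MemPp p ν ∧ Wp p μ ν ≤ r}

theorem eLpNorm_ofReal_eq_lintegral {α F : Type*} [MeasurableSpace α] [NormedAddCommGroup F]
    (hp : 0 < p) (f : α → F) (m : Measure α) :
    eLpNorm f (ENNReal.ofReal p) m = (∫⁻ a, ‖f a‖ₑ ^ p ∂m) ^ (1 / p) := by
  rw [eLpNorm_eq_lintegral_rpow_enorm_toReal (by simpa using hp) ofReal_ne_top,
    ENNReal.toReal_ofReal hp.le]

theorem memPp_iff_momentNorm_lt_top (hp : 0 < p) :
    MemPp p μ ↔ IsProbabilityMeasure μ ∧ momentNorm p μ < ∞ := by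
  rw [momentNorm, eLpNorm_ofReal_eq_lintegral hp, ENNReal.rpow_lt_top_iff_of_pos (by positivity)]
  rfl

theorem momentNorm_dirac_zero (hp : 0 < p) : momentNorm p (Measure.dirac (0 : Ed d)) = 0 := by
  rw [momentNorm, eLpNorm_ofReal_eq_lintegral hp, lintegral_dirac]
  simp [hp]

theorem memPp_dirac_zero (hp : 0 < p) : MemPp p (Measure.dirac (0 : Ed d)) :=
  (memPp_iff_momentNorm_lt_top hp).2 ⟨inferInstance, by simp [momentNorm_dirac_zero hp]⟩

theorem Wp_eq_toReal_iInf_transportCost (hp : 0 < p) :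
    Wp p μ ν = (⨅ γ ∈ {γ | IsCoupling γ μ ν}, transportCost p γ).toReal := by
  simp only [transportCost, eLpNorm_ofReal_eq_lintegral hp]
  rfl

theorem isCoupling_prod (μ ν : Measure (Ed d)) [IsProbabilityMeasure μ] [IsProbabilityMeasure ν] :
    IsCoupling (μ.prod ν) μ ν :=
  ⟨by simp, by simp⟩

namespace IsCoupling

theorem isProbabilityMeasure (hγ : IsCoupling γ μ ν) [IsProbabilityMeasure μ] :
    IsProbabilityMeasure γ := by
  have : IsProbabilityMeasure (γ.map Prod.fst) := by rwa [hγ.1]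
  exact Measure.isProbabilityMeasure_of_map Prod.fst

theorem isProbabilityMeasure_snd (hγ : IsCoupling γ μ ν) [IsProbabilityMeasure μ] :
    IsProbabilityMeasure ν := by
  have := hγ.isProbabilityMeasure
  rw [← hγ.2]
  exact Measure.isProbabilityMeasure_map measurable_snd.aemeasurable

theorem eLpNorm_fst (hγ : IsCoupling γ μ ν) :
    eLpNorm (fun q : Ed d × Ed d => q.1) (ENNReal.ofReal p) γ = momentNorm p μ := by
  rw [momentNorm, ← hγ.1, eLpNorm_map_measure (by fun_prop) (by fun_prop)]
  rfl

theorem eLpNorm_snd (hγ : IsCoupling γ μ ν) :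
    eLpNorm (fun q : Ed d × Ed d => q.2) (ENNReal.ofReal p) γ = momentNorm p ν := by
  rw [momentNorm, ← hγ.2, eLpNorm_map_measure (by fun_prop) (by fun_prop)]
  rfl

theorem transportCost_le (hγ : IsCoupling γ μ ν) (hp : 1 ≤ p) :
    transportCost p γ ≤ momentNorm p ν + momentNorm p μ := by
  rw [← hγ.eLpNorm_fst, ← hγ.eLpNorm_snd]
  exact eLpNorm_sub_le (by fun_prop) (by fun_prop) (by simpa using hp)

theorem momentNorm_snd_le (hγ : IsCoupling γ μ ν) (hp : 1 ≤ p) :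
    momentNorm p ν ≤ momentNorm p μ + transportCost p γ := by
  have hsplit : (fun q : Ed d × Ed d => q.2) = (fun q => q.1) + fun q => q.2 - q.1 := by
    ext1 q
    simp
  rw [← hγ.eLpNorm_fst, ← hγ.eLpNorm_snd, hsplit]
  exact eLpNorm_add_le (by fun_prop) (by fun_prop) (by simpa using hp)

theorem momentNorm_fst_le (hγ : IsCoupling γ μ ν) (hp : 1 ≤ p) :
    momentNorm p μ ≤ momentNorm p ν + transportCost p γ := by
  have hsplit : (fun q : Ed d × Ed d => q.1) = (fun q => q.2) - fun q => q.2 - q.1 := by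
    ext1 q
    simp
  rw [← hγ.eLpNorm_fst, ← hγ.eLpNorm_snd, hsplit]
  exact eLpNorm_sub_le (by fun_prop) (by fun_prop) (by simpa using hp)

theorem Wp_le (hγ : IsCoupling γ μ ν) (hp : 0 < p) {r : ℝ} (hr : 0 ≤ r)
    (hcost : transportCost p γ ≤ ENNReal.ofReal r) : Wp p μ ν ≤ r := by
  rw [Wp_eq_toReal_iInf_transportCost hp]
  exact ENNReal.toReal_le_of_le_ofReal hr ((iInf₂_le γ hγ).trans hcost)

end IsCoupling

theorem exists_isCoupling_of_Wp_lt (hp : 1 ≤ p) (hμ : MemPp p μ) (hν : MemPp p ν) {r : ℝ}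
    (h : Wp p μ ν < r) : ∃ γ, IsCoupling γ μ ν ∧ transportCost p γ ≤ ENNReal.ofReal r := by
  have hp₀ := zero_lt_one.trans_le hp
  have := hμ.1
  have := hν.1
  have hprod := isCoupling_prod μ ν
  have hfin : ⨅ γ ∈ {γ | IsCoupling γ μ ν}, transportCost p γ < ∞ :=
    (biInf_le (transportCost p) hprod).trans_lt <| (hprod.transportCost_le hp).trans_lt <|
      ENNReal.add_lt_top.2 ⟨((memPp_iff_momentNorm_lt_top hp₀).1 hν).2,
        ((memPp_iff_momentNorm_lt_top hp₀).1 hμ).2⟩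
  rw [Wp_eq_toReal_iInf_transportCost hp₀, ← ENNReal.lt_ofReal_iff_toReal_lt hfin.ne] at h
  simp only [iInf_lt_iff] at h
  obtain ⟨γ, hγ, hlt⟩ := h
  exact ⟨γ, hγ, hlt.le⟩

theorem mem_wassersteinBall_iff (hp : 1 ≤ p) (hμ : MemPp p μ) {r : ℝ} (hr : 0 ≤ r) :
    ν ∈ wassersteinBall p μ r ↔
      ∀ η > 0, ∃ γ, IsCoupling γ μ ν ∧ transportCost p γ ≤ ENNReal.ofReal (r + η) := by
  have hp₀ := zero_lt_one.trans_le hp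
  have := hμ.1
  refine ⟨fun hν η hη => exists_isCoupling_of_Wp_lt hp hμ hν.1
    (hν.2.trans_lt (lt_add_of_pos_right r hη)), fun h => ⟨?_, ?_⟩⟩
  · obtain ⟨γ, hγ, hcost⟩ := h 1 one_pos
    exact (memPp_iff_momentNorm_lt_top hp₀).2 ⟨hγ.isProbabilityMeasure_snd,
      (hγ.momentNorm_snd_le hp).trans_lt <| ENNReal.add_lt_top.2
        ⟨((memPp_iff_momentNorm_lt_top hp₀).1 hμ).2, hcost.trans_lt ofReal_lt_top⟩⟩
  · refine le_of_forall_pos_le_add fun η hη => ?_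
    obtain ⟨γ, hγ, hcost⟩ := h η hη
    exact hγ.Wp_le hp₀ (by positivity) hcost

theorem le_add_ofReal_of_forall_pos {a b : ℝ≥0∞} {r : ℝ} (hr : 0 ≤ r)
    (h : ∀ η > 0, a ≤ b + ENNReal.ofReal (r + η)) : a ≤ b + ENNReal.ofReal r := by
  refine ENNReal.le_of_forall_pos_le_add fun η hη _ => (h η (by exact_mod_cast hη)).trans_eq ?_
  rw [ENNReal.ofReal_add hr η.coe_nonneg, ENNReal.ofReal_coe_nnreal, add_assoc]

theorem momentNorm_le_of_mem_wassersteinBall (hp : 1 ≤ p) (hμ : MemPp p μ) {r : ℝ} (hr : 0 ≤ r)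
    (hν : ν ∈ wassersteinBall p μ r) : momentNorm p ν ≤ momentNorm p μ + ENNReal.ofReal r := by
  refine le_add_ofReal_of_forall_pos hr fun η hη => ?_
  obtain ⟨γ, hγ, hcost⟩ := (mem_wassersteinBall_iff hp hμ hr).1 hν η hη
  exact (hγ.momentNorm_snd_le hp).trans (by gcongr)

theorem momentNorm_le_ofReal_Wp_dirac_zero (hp : 1 ≤ p) (hμ : MemPp p μ) :
    momentNorm p μ ≤ ENNReal.ofReal (Wp p μ (Measure.dirac 0)) := by
  have hp₀ := zero_lt_one.trans_le hp
  rw [← zero_add (ENNReal.ofReal _), ← momentNorm_dirac_zero (d := d) hp₀]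
  refine le_add_ofReal_of_forall_pos ENNReal.toReal_nonneg fun η hη => ?_
  obtain ⟨γ, hγ, hcost⟩ := exists_isCoupling_of_Wp_lt hp hμ (memPp_dirac_zero hp₀)
    (lt_add_of_pos_right _ hη)
  exact (hγ.momentNorm_fst_le hp).trans (by gcongr)

theorem map_add_right_mem_wassersteinBall (hp : 1 ≤ p) (hμ : MemPp p μ) {r : ℝ} {w : Ed d}
    (hw : ‖w‖ ≤ r) : μ.map (· + w) ∈ wassersteinBall p μ r := by
  have := hμ.1
  have hr : 0 ≤ r := (norm_nonneg w).trans hw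
  refine (mem_wassersteinBall_iff hp hμ hr).2 fun η hη =>
    ⟨μ.map fun y => (y, y + w), ⟨?_, ?_⟩, ?_⟩
  · rw [Measure.map_map (by fun_prop) (by fun_prop)]
    exact Measure.map_id
  · rw [Measure.map_map (by fun_prop) (by fun_prop)]
    rfl
  · rw [transportCost, eLpNorm_map_measure (by fun_prop) (by fun_prop)]
    calc eLpNorm ((fun q : Ed d × Ed d => q.2 - q.1) ∘ fun y => (y, y + w)) (ENNReal.ofReal p) μ
        = eLpNorm (fun _ : Ed d => w) (ENNReal.ofReal p) μ := by simp [Function.comp_def]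
      _ = ENNReal.ofReal ‖w‖ := by
        rw [eLpNorm_const' _ (by simpa using hp.trans_lt' one_pos) ofReal_ne_top]
        simp
      _ ≤ ENNReal.ofReal (r + η) := ENNReal.ofReal_le_ofReal (by linarith)

theorem measure_le_norm_le (hp : 0 < p) (ν : Measure (Ed d)) {R : ℝ} (hR : 0 < R) :
    ν {y | R ≤ ‖y‖} ≤ ((ENNReal.ofReal R)⁻¹ * momentNorm p ν) ^ p := by
  have hmarkov := meas_ge_le_mul_pow_eLpNorm_enorm ν (p := ENNReal.ofReal p) (by simpa using hp)
    ofReal_ne_top (f := fun y : Ed d => y) (by fun_prop) (ε := ENNReal.ofReal R) (by simpa using hR)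
    (by simp)
  rw [ENNReal.toReal_ofReal hp.le, ← ENNReal.mul_rpow_of_nonneg _ _ hp.le] at hmarkov
  refine (measure_mono fun y hy => ?_).trans hmarkov
  exact (ENNReal.ofReal_le_ofReal hy).trans_eq (ofReal_norm y)

theorem isTightMeasureSet_of_momentNorm_le (hp : 0 < p) {A : Set (Measure (Ed d))} {K : ℝ≥0∞}
    (hK : K ≠ ∞) (hA : ∀ ν ∈ A, momentNorm p ν ≤ K) : IsTightMeasureSet A := by
  refine isTightMeasureSet_of_tendsto_measure_norm_gt ?_
  have hbound : Tendsto (fun R => ((ENNReal.ofReal R)⁻¹ * K) ^ p) atTop (𝓝 0) := by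
    have hinv : Tendsto (fun R => (ENNReal.ofReal R)⁻¹) atTop (𝓝 0) :=
      ENNReal.inv_top ▸ tendsto_ofReal_atTop.inv
    simpa [hp] using (ENNReal.Tendsto.mul_const hinv (.inr hK)).ennrpow_const p
  refine tendsto_of_tendsto_of_tendsto_of_le_of_le' tendsto_const_nhds hbound
    (.of_forall fun _ => zero_le) ?_
  filter_upwards [eventually_gt_atTop 0] with R hR
  refine iSup₂_le fun ν hν => (measure_mono fun y (hy : R < ‖y‖) => hy.le).trans <|
    (measure_le_norm_le hp ν hR).trans ?_
  gcongr
  exact hA ν hν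

theorem concentratesAtZero_of_momentNorm_le (hp : 0 < p) {ι : Type*} {l : Filter ι}
    {A : ι → Set (Measure (Ed d))} {K : ι → ℝ≥0∞} (hK : Tendsto K l (𝓝 0))
    (hA : ∀ᶠ i in l, ∀ ν ∈ A i, momentNorm p ν ≤ K i) : ConcentratesAtZero A l := by
  intro r hr ε hε
  have hbound : Tendsto (fun i => ((ENNReal.ofReal r)⁻¹ * K i) ^ p) l (𝓝 0) := by
    have hconst : (ENNReal.ofReal r)⁻¹ ≠ ∞ := by simpa using hr
    simpa [hp] using (ENNReal.Tendsto.const_mul hK (.inr hconst)).ennrpow_const p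
  filter_upwards [hA, hbound.eventually_le_const (ENNReal.ofReal_pos.2 hε)] with i hmoment hi ν hν
  refine ENNReal.toReal_le_of_le_ofReal hε.le ((measure_le_norm_le hp ν hr).trans (le_trans ?_ hi))
  gcongr
  exact hmoment ν hν

end Wasserstein

section KernelGluing

open ProbabilityTheory

variable {d : ℕ} {p : ℝ} {μ₁ μ₂ ν₁ : Measure (Ed d)} {γ₁ : Measure (Ed d × Ed d)}
  {κ : Kernel (Ed d) (Ed d)} {G : Kernel (Ed d) (Ed d × Ed d)}

/-- Transport `μ₁ ∗ μ₂` by moving the first summand along the plan `γ₁` and, once it has arrived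
at `y`, the second summand along the plan `G y`. -/
def gluedPlan (γ₁ : Measure (Ed d × Ed d)) (G : Kernel (Ed d) (Ed d × Ed d)) :
    Measure (Ed d × Ed d) :=
  (γ₁ ⊗ₘ G.comap Prod.snd measurable_snd).map fun q => (q.1.1 + q.2.1, q.1.2 + q.2.2)

theorem lintegral_gluedPlan [SFinite γ₁] [IsSFiniteKernel G] {φ : Ed d × Ed d → ℝ≥0∞}
    (hφ : Measurable φ) :
    ∫⁻ q, φ q ∂gluedPlan γ₁ G = ∫⁻ a, ∫⁻ b, φ (a.1 + b.1, a.2 + b.2) ∂G a.2 ∂γ₁ := by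
  rw [gluedPlan, lintegral_map hφ (by fun_prop), Measure.lintegral_compProd (by fun_prop)]
  rfl

theorem isCoupling_gluedPlan [IsProbabilityMeasure μ₁] [IsProbabilityMeasure μ₂]
    [IsMarkovKernel κ] [IsMarkovKernel G] (hγ : IsCoupling γ₁ μ₁ ν₁)
    (hG : ∀ y, IsCoupling (G y) μ₂ (κ y)) :
    IsCoupling (gluedPlan γ₁ G) (μ₁.conv μ₂) (kernelConv ν₁ κ) := by
  have := hγ.isProbabilityMeasure
  have := hγ.isProbabilityMeasure_snd
  refine ⟨Measure.ext_of_lintegral _ fun φ hφ => ?_, Measure.ext_of_lintegral _ fun φ hφ => ?_⟩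
  · calc ∫⁻ z, φ z ∂(gluedPlan γ₁ G).map Prod.fst
        = ∫⁻ a, ∫⁻ b, φ (a.1 + b.1) ∂G a.2 ∂γ₁ := by
          rw [lintegral_map hφ (by fun_prop), lintegral_gluedPlan (by fun_prop)]
      _ = ∫⁻ a, ∫⁻ z, φ (a.1 + z) ∂μ₂ ∂γ₁ := by
          refine lintegral_congr fun a => ?_
          rw [← (hG a.2).1, lintegral_map (by fun_prop) (by fun_prop)]
      _ = ∫⁻ z, φ z ∂μ₁.conv μ₂ := by
          rw [Measure.lintegral_conv hφ, ← hγ.1, lintegral_map (by fun_prop) (by fun_prop)]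
  · have hφ_add : Measurable fun q : Ed d × Ed d => φ (q.1 + q.2) := by fun_prop
    calc ∫⁻ z, φ z ∂(gluedPlan γ₁ G).map Prod.snd
        = ∫⁻ a, ∫⁻ b, φ (a.2 + b.2) ∂G a.2 ∂γ₁ := by
          rw [lintegral_map hφ (by fun_prop), lintegral_gluedPlan (by fun_prop)]
      _ = ∫⁻ a, ∫⁻ z, φ (a.2 + z) ∂κ a.2 ∂γ₁ := by
          refine lintegral_congr fun a => ?_
          rw [← (hG a.2).2, lintegral_map (by fun_prop) (by fun_prop)]
      _ = ∫⁻ y, ∫⁻ z, φ (y + z) ∂κ y ∂ν₁ := by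
          rw [← hγ.2, lintegral_map (Measurable.lintegral_kernel_prod_right' hφ_add) (by fun_prop)]
      _ = ∫⁻ z, φ z ∂kernelConv ν₁ κ := by
          rw [kernelConv, lintegral_map hφ (by fun_prop), Measure.lintegral_compProd hφ_add]

theorem transportCost_gluedPlan_le [IsProbabilityMeasure γ₁] [IsMarkovKernel G] (hp : 1 ≤ p)
    {c₁ c₂ : ℝ≥0∞} (hγ : transportCost p γ₁ ≤ c₁) (hG : ∀ y, transportCost p (G y) ≤ c₂) :
    transportCost p (gluedPlan γ₁ G) ≤ c₁ + c₂ := by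
  have hp₀ := zero_lt_one.trans_le hp
  set Γ := γ₁ ⊗ₘ G.comap Prod.snd measurable_snd
  have hsplit : (fun q : Ed d × Ed d => q.2 - q.1) ∘
      (fun q : (Ed d × Ed d) × (Ed d × Ed d) => (q.1.1 + q.2.1, q.1.2 + q.2.2)) =
      (fun q => q.1.2 - q.1.1) + fun q => q.2.2 - q.2.1 := by
    ext1 q
    simp only [Function.comp_apply, Pi.add_apply]
    abel
  have hfst : eLpNorm (fun q => q.1.2 - q.1.1) (ENNReal.ofReal p) Γ = transportCost p γ₁ := by
    rw [transportCost, ← Measure.fst_compProd γ₁ (G.comap Prod.snd measurable_snd), Measure.fst,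
      eLpNorm_map_measure (by fun_prop) (by fun_prop)]
    rfl
  have hsnd : eLpNorm (fun q => q.2.2 - q.2.1) (ENNReal.ofReal p) Γ ≤ c₂ := by
    simp only [transportCost, eLpNorm_ofReal_eq_lintegral hp₀, one_div,
      ENNReal.rpow_inv_le_iff hp₀] at hG ⊢
    rw [Measure.lintegral_compProd (by fun_prop)]
    calc ∫⁻ a, ∫⁻ b, ‖b.2 - b.1‖ₑ ^ p ∂G a.2 ∂γ₁ ≤ ∫⁻ _, c₂ ^ p ∂γ₁ :=
          lintegral_mono fun a => hG a.2
      _ = c₂ ^ p := by simp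
  rw [transportCost, gluedPlan, eLpNorm_map_measure (by fun_prop) (by fun_prop), hsplit]
  exact (eLpNorm_add_le (by fun_prop) (by fun_prop) (by simpa using hp)).trans
    (add_le_add (hfst.trans_le hγ) hsnd)

theorem MemPp.conv (hp : 1 ≤ p) (hμ₁ : MemPp p μ₁) (hμ₂ : MemPp p μ₂) :
    MemPp p (μ₁.conv μ₂) := by
  have hp₀ := zero_lt_one.trans_le hp
  rw [memPp_iff_momentNorm_lt_top hp₀] at hμ₁ hμ₂ ⊢
  obtain ⟨_, hmoment₁⟩ := hμ₁
  obtain ⟨_, hmoment₂⟩ := hμ₂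
  refine ⟨inferInstance, lt_of_le_of_lt ?_ (ENNReal.add_lt_top.2 ⟨hmoment₁, hmoment₂⟩)⟩
  have hprod := isCoupling_prod μ₁ μ₂
  rw [momentNorm, Measure.conv, eLpNorm_map_measure (by fun_prop) (by fun_prop),
    ← hprod.eLpNorm_fst, ← hprod.eLpNorm_snd]
  exact eLpNorm_add_le (by fun_prop) (by fun_prop) (by simpa using hp)

theorem kernelConv_mem_wassersteinBall (hp : 1 ≤ p) (hμ₁ : MemPp p μ₁) (hμ₂ : MemPp p μ₂)
    {r₁ r₂ : ℝ} (hr₁ : 0 ≤ r₁) (hr₂ : 0 ≤ r₂) (hν₁ : ν₁ ∈ wassersteinBall p μ₁ r₁)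
    {N : ℕ → Measure (Ed d)}
    (hN : ∀ n, N n ∈ wassersteinBall p μ₂ r₂) {i : Ed d → ℕ} (hi : Measurable i) :
    kernelConv ν₁ ((Kernel.ofFunOfCountable N).comap i hi) ∈
      wassersteinBall p (μ₁.conv μ₂) (r₁ + r₂) := by
  have := hμ₁.1
  have := hμ₂.1
  refine (mem_wassersteinBall_iff hp (hμ₁.conv hp hμ₂) (add_nonneg hr₁ hr₂)).2 fun η hη => ?_
  obtain ⟨γ₁, hγ₁, hcost₁⟩ := (mem_wassersteinBall_iff hp hμ₁ hr₁).1 hν₁ (η / 2) (by positivity)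
  choose γ₂ hγ₂ hcost₂ using fun n =>
    (mem_wassersteinBall_iff hp hμ₂ hr₂).1 (hN n) (η / 2) (by positivity)
  have := hγ₁.isProbabilityMeasure
  let κ : Kernel (Ed d) (Ed d) := (Kernel.ofFunOfCountable N).comap i hi
  let G : Kernel (Ed d) (Ed d × Ed d) := (Kernel.ofFunOfCountable γ₂).comap i hi
  have : IsMarkovKernel κ := ⟨fun y => (hN (i y)).1.1⟩
  have : IsMarkovKernel G := ⟨fun y => (hγ₂ (i y)).isProbabilityMeasure⟩
  have hG : ∀ y, IsCoupling (G y) μ₂ (κ y) := fun y => hγ₂ (i y)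
  have hcostG : ∀ y, transportCost p (G y) ≤ ENNReal.ofReal (r₂ + η / 2) := fun y => hcost₂ (i y)
  refine ⟨gluedPlan γ₁ G, isCoupling_gluedPlan hγ₁ hG,
    (transportCost_gluedPlan_le hp hcost₁ hcostG).trans_eq ?_⟩
  rw [← ENNReal.ofReal_add (by positivity) (by positivity)]
  ring_nf

end KernelGluing

section WassersteinFamily

open ProbabilityTheory

variable {d : ℕ} {p δ : ℝ} {μ : ℝ → Measure (Ed d)} {g : Ed d → ℝ}

/-- The one-step operators `S(t)` of `SopD` as upper expectations over Wasserstein balls. -/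
def wassersteinFamily (p δ : ℝ) (μ : ℝ → Measure (Ed d)) (t : ℝ) : (Ed d → ℝ) → Ed d → ℝ :=
  upperExpectation (wassersteinBall p (μ t) (δ * t))

/-- The family `μ_t ∗ δ_{t w}`, adding the deterministic drift `w` to a convolution semigroup. -/
def drift (μ : ℝ → Measure (Ed d)) (w : Ed d) (t : ℝ) : Measure (Ed d) :=
  (μ t).conv (Measure.dirac (t • w))

theorem SlimD_eq_dyadicLimit : SlimD p δ μ = dyadicLimit (wassersteinFamily p δ μ) := by
  have hSop : ∀ t, SopD p δ (μ t) t = wassersteinFamily p δ μ t := fun t => by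
    ext g x
    simp only [SopD, wassersteinFamily, upperExpectation, wassersteinBall, image, mem_ofPred_eq,
      and_assoc, eq_comm]
  ext t f x
  simp only [SlimD, SiterND, hSop]
  rfl

theorem isProbabilityMeasure_of_mem_wassersteinBall {μ : Measure (Ed d)} {r : ℝ} :
    ∀ ν ∈ wassersteinBall p μ r, IsProbabilityMeasure ν := fun _ hν => hν.1.1

theorem self_mem_wassersteinBall (hp : 1 ≤ p) {μ : Measure (Ed d)} (hμ : MemPp p μ) {r : ℝ}
    (hr : 0 ≤ r) : μ ∈ wassersteinBall p μ r := by
  simpa using map_add_right_mem_wassersteinBall hp hμ (w := 0) (by simpa using hr)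

theorem wassersteinBall_nonempty (hp : 1 ≤ p) {μ : Measure (Ed d)} (hμ : MemPp p μ) {r : ℝ}
    (hr : 0 ≤ r) : (wassersteinBall p μ r).Nonempty :=
  ⟨μ, self_mem_wassersteinBall hp hμ hr⟩

theorem tendsto_upperExpectation_cocompact_of_subset_wassersteinBall (hp : 1 ≤ p)
    {μ : Measure (Ed d)} (hμ : MemPp p μ) {r : ℝ} (hr : 0 ≤ r) {A : Set (Measure (Ed d))}
    (hA : A ⊆ wassersteinBall p μ r) (hne : A.Nonempty) (f : C₀(Ed d, ℝ)) :
    Tendsto (upperExpectation A f) (cocompact (Ed d)) (𝓝 0) := by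
  have hp₀ := zero_lt_one.trans_le hp
  refine tendsto_upperExpectation_cocompact
    (fun ν hν => isProbabilityMeasure_of_mem_wassersteinBall ν (hA hν)) hne ?_
    (.of_zeroAtInfty f) f.zero_at_infty'
  exact isTightMeasureSet_of_momentNorm_le hp₀
    (ENNReal.add_lt_top.2 ⟨((memPp_iff_momentNorm_lt_top hp₀).1 hμ).2, ofReal_lt_top⟩).ne
    fun ν hν => momentNorm_le_of_mem_wassersteinBall hp hμ hr (hA hν)

namespace IsConvSemigroup

theorem memPp (hμ : IsConvSemigroup p μ) {t : ℝ} (ht : 0 ≤ t) : MemPp p (μ t) :=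
  hμ.2.2 t ht

theorem tendsto_momentNorm (hp : 1 ≤ p) (hμ : IsConvSemigroup p μ)
    (hμ₀ : WContinuousAtZero p μ) : Tendsto (fun t => momentNorm p (μ t)) (𝓝[≥] 0) (𝓝 0) := by
  have hzero : momentNorm p (μ 0) = 0 := by
    rw [hμ.1, momentNorm_dirac_zero (zero_lt_one.trans_le hp)]
  have hpos : Tendsto (fun t => momentNorm p (μ t)) (𝓝[>] 0) (𝓝 0) := by
    refine tendsto_of_tendsto_of_tendsto_of_le_of_le' tendsto_const_nhds
      (ENNReal.ofReal_zero ▸ (ENNReal.continuous_ofReal.tendsto 0).comp hμ₀)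
      (.of_forall fun _ => zero_le) ?_
    filter_upwards [self_mem_nhdsWithin] with t ht
    exact momentNorm_le_ofReal_Wp_dirac_zero hp (hμ.memPp (le_of_lt ht))
  rw [← Ioi_union_left, nhdsWithin_union, nhdsWithin_singleton]
  exact hpos.sup (tendsto_pure_left.2 fun s hs => hzero ▸ mem_of_mem_nhds hs)

theorem concentratesAtZero_of_subset_wassersteinBall (hp : 1 ≤ p) (hδ : 0 ≤ δ)
    (hμ : IsConvSemigroup p μ) (hμ₀ : WContinuousAtZero p μ) {A : ℝ → Set (Measure (Ed d))}
    (hA : ∀ t ≥ 0, A t ⊆ wassersteinBall p (μ t) (δ * t)) : ConcentratesAtZero A (𝓝[≥] 0) := by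
  have hradius : Tendsto (fun t => ENNReal.ofReal (δ * t)) (𝓝[≥] 0) (𝓝 0) := by
    have hcont : Continuous fun t => ENNReal.ofReal (δ * t) :=
      ENNReal.continuous_ofReal.comp (continuous_const_mul δ)
    simpa using (hcont.tendsto 0).mono_left nhdsWithin_le_nhds
  refine concentratesAtZero_of_momentNorm_le (zero_lt_one.trans_le hp)
    (add_zero (0 : ℝ≥0∞) ▸ (hμ.tendsto_momentNorm hp hμ₀).add hradius) ?_
  filter_upwards [self_mem_nhdsWithin] with t ht ν hν
  exact momentNorm_le_of_mem_wassersteinBall hp (hμ.memPp ht) (mul_nonneg hδ ht) (hA t ht hν)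

theorem isSupermultiplicative_wassersteinFamily (hp : 1 ≤ p) (hδ : 0 ≤ δ)
    (hμ : IsConvSemigroup p μ) : IsSupermultiplicative (wassersteinFamily p δ μ) where
  isNiveloid ht := isNiveloid_upperExpectation isProbabilityMeasure_of_mem_wassersteinBall
    (wassersteinBall_nonempty hp (hμ.memPp ht) (mul_nonneg hδ ht))
  comp_le {s t} hs ht g hg x := by
    refine upperExpectation_upperExpectation_le isProbabilityMeasure_of_mem_wassersteinBall
      (wassersteinBall_nonempty hp (hμ.memPp hs) (mul_nonneg hδ hs))
      isProbabilityMeasure_of_mem_wassersteinBall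
      (wassersteinBall_nonempty hp (hμ.memPp ht) (mul_nonneg hδ ht))
      isProbabilityMeasure_of_mem_wassersteinBall (fun ν hν N hN i hi => ?_) hg x
    rw [hμ.2.1 s t hs ht, mul_add]
    exact kernelConv_mem_wassersteinBall hp (hμ.memPp hs) (hμ.memPp ht) (mul_nonneg hδ hs)
      (mul_nonneg hδ ht) hν hN hi

theorem isStronglyContinuous_wassersteinFamily (hp : 1 ≤ p) (hδ : 0 ≤ δ)
    (hμ : IsConvSemigroup p μ) (hμ₀ : WContinuousAtZero p μ) :
    IsStronglyContinuous (wassersteinFamily p δ μ) :=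
  (hμ.concentratesAtZero_of_subset_wassersteinBall hp hδ hμ₀ fun _ _ => Subset.rfl)
    |>.isStronglyContinuous (fun _ _ => isProbabilityMeasure_of_mem_wassersteinBall)
      fun _ ht => wassersteinBall_nonempty hp (hμ.memPp ht) (mul_nonneg hδ ht)

theorem drift_mem_wassersteinBall (hp : 1 ≤ p) (hμ : IsConvSemigroup p μ) {w : Ed d}
    (hw : ‖w‖ ≤ δ) {t : ℝ} (ht : 0 ≤ t) : drift μ w t ∈ wassersteinBall p (μ t) (δ * t) := by
  have := (hμ.memPp ht).1
  rw [drift, Measure.conv_dirac]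
  refine map_add_right_mem_wassersteinBall hp (hμ.memPp ht) ?_
  rw [norm_smul, Real.norm_of_nonneg ht, mul_comm]
  gcongr

end IsConvSemigroup

theorem isConvSemigroup_drift (hp : 1 ≤ p) (hμ : IsConvSemigroup p μ) (w : Ed d) :
    IsConvSemigroup p (drift μ w) := by
  refine ⟨by simp [drift, hμ.1], fun s t hs ht => ?_,
    fun t ht => (hμ.drift_mem_wassersteinBall hp le_rfl ht).1⟩
  have := (hμ.memPp hs).1
  have := (hμ.memPp ht).1
  simp only [drift]
  rw [hμ.2.1 s t hs ht, add_smul, ← Measure.dirac_conv_dirac, Measure.conv_assoc,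
    ← Measure.conv_assoc (μ t), Measure.conv_comm (μ t), Measure.conv_assoc, Measure.conv_assoc]

theorem Smu_eq_upperExpectation (t : ℝ) : Smu μ t = upperExpectation {μ t} := by
  ext g x
  rw [upperExpectation_singleton, Smu]

theorem Smu_drift (hμ : IsConvSemigroup p μ) {t : ℝ} (ht : 0 ≤ t) (hg : Continuous g)
    (w x : Ed d) : Smu (drift μ w) t g x = Smu μ t g (x + t • w) := by
  have := (hμ.memPp ht).1
  rw [Smu, drift, Measure.conv_dirac, integral_map (by fun_prop) (by fun_prop), Smu]
  exact integral_congr_ae (ae_of_all _ fun y => by simp only [add_assoc, add_comm y])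

namespace IsConvSemigroup

theorem isNiveloid_Smu (hμ : IsConvSemigroup p μ) {t : ℝ} (ht : 0 ≤ t) : IsNiveloid (Smu μ t) := by
  rw [Smu_eq_upperExpectation]
  exact isNiveloid_upperExpectation (forall_eq.2 (hμ.memPp ht).1) (singleton_nonempty _)

theorem isSubmultiplicative_Smu (hμ : IsConvSemigroup p μ) : IsSubmultiplicative (Smu μ) where
  isNiveloid := hμ.isNiveloid_Smu
  le_comp {s t} hs ht g hg x := by
    have := (hμ.memPp hs).1
    have := (hμ.memPp ht).1
    rw [Smu, hμ.2.1 s t hs ht, integral_conv (hg.integrable_translate _ x)]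
    simp only [Smu, add_assoc, le_refl]

variable {w : Ed d}

theorem isDominatedBy_wassersteinFamily (hp : 1 ≤ p) (hμ : IsConvSemigroup p μ) (hw : ‖w‖ ≤ δ) :
    IsDominatedBy (Smu (drift μ w)) (wassersteinFamily p δ μ) := fun _ ht _ hg x =>
  integral_le_upperExpectation isProbabilityMeasure_of_mem_wassersteinBall hg
    (hμ.drift_mem_wassersteinBall hp hw ht) x

theorem isStronglyContinuous_Smu_drift (hp : 1 ≤ p) (hμ : IsConvSemigroup p μ)
    (hμ₀ : WContinuousAtZero p μ) (w : Ed d) :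
    IsStronglyContinuous (Smu (drift μ w)) := by
  have hmem : ∀ t ≥ 0, {drift μ w t} ⊆ wassersteinBall p (μ t) (‖w‖ * t) := fun t ht =>
    singleton_subset_iff.2 (hμ.drift_mem_wassersteinBall hp le_rfl ht)
  rw [funext Smu_eq_upperExpectation]
  exact (hμ.concentratesAtZero_of_subset_wassersteinBall hp (norm_nonneg w) hμ₀ hmem)
    |>.isStronglyContinuous
      (fun t ht ν hν => isProbabilityMeasure_of_mem_wassersteinBall ν (hmem t ht hν))
      fun _ _ => singleton_nonempty _

theorem tendsto_wassersteinFamily_cocompact (hp : 1 ≤ p) (hδ : 0 ≤ δ) (hμ : IsConvSemigroup p μ)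
    {t : ℝ} (ht : 0 ≤ t) (f : C₀(Ed d, ℝ)) :
    Tendsto (wassersteinFamily p δ μ t f) (cocompact (Ed d)) (𝓝 0) :=
  have hr := mul_nonneg hδ ht
  tendsto_upperExpectation_cocompact_of_subset_wassersteinBall hp (hμ.memPp ht) hr Subset.rfl
    (wassersteinBall_nonempty hp (hμ.memPp ht) hr) f

theorem tendsto_Smu_drift_cocompact (hp : 1 ≤ p) (hμ : IsConvSemigroup p μ) (w : Ed d) {t : ℝ}
    (ht : 0 ≤ t) (f : C₀(Ed d, ℝ)) :
    Tendsto (Smu (drift μ w) t f) (cocompact (Ed d)) (𝓝 0) := by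
  rw [Smu_eq_upperExpectation]
  exact tendsto_upperExpectation_cocompact_of_subset_wassersteinBall hp (hμ.memPp ht)
    (mul_nonneg (norm_nonneg w) ht)
    (singleton_subset_iff.2 (hμ.drift_mem_wassersteinBall hp le_rfl ht)) (singleton_nonempty _) f

end IsConvSemigroup

end WassersteinFamily

section GradientEstimate

variable {d : ℕ} {p : ℝ}

theorem setIntegral_norm_le_mul_measureReal_rpow {α F : Type*} [MeasurableSpace α]
    [NormedAddCommGroup F] {m : Measure α} [IsFiniteMeasure m] (hp : 1 ≤ p) {φ : α → F}
    (hφ : AEStronglyMeasurable φ m) {a : ℝ} (ha : 0 ≤ a)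
    (hnorm : eLpNorm φ (ENNReal.ofReal p) m ≤ ENNReal.ofReal a) (B : Set α) :
    ∫ q in B, ‖φ q‖ ∂m ≤ a * m.real B ^ (1 - 1 / p) := by
  have hexp : 0 ≤ 1 - 1 / p := sub_nonneg.2 ((div_le_one (by linarith)).2 hp)
  rw [integral_norm_eq_lintegral_enorm hφ.restrict, ← eLpNorm_one_eq_lintegral_enorm]
  refine ENNReal.toReal_le_of_le_ofReal (by positivity) ?_
  calc eLpNorm φ 1 (m.restrict B)
      ≤ eLpNorm φ (ENNReal.ofReal p) (m.restrict B) * m B ^ (1 - 1 / p) := by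
        simpa [ENNReal.toReal_ofReal (zero_le_one.trans hp)] using
          eLpNorm_le_eLpNorm_mul_rpow_measure_univ (p := 1) (q := ENNReal.ofReal p)
            (by simpa using hp) (hφ.restrict (s := B))
    _ ≤ ENNReal.ofReal a * m B ^ (1 - 1 / p) := by
        gcongr
        exact (eLpNorm_restrict_le _ _ _ _).trans hnorm
    _ = ENNReal.ofReal (a * m.real B ^ (1 - 1 / p)) := by
        rw [ENNReal.ofReal_mul ha, ← ENNReal.ofReal_rpow_of_nonneg measureReal_nonneg hexp,
          ofReal_measureReal]

variable {μ ν : Measure (Ed d)} {γ : Measure (Ed d × Ed d)} {g : Ed d → ℝ}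

theorem IsCoupling.measureReal_norm_union_le (hγ : IsCoupling γ μ ν) (r : ℝ) :
    γ.real ({q | r ≤ ‖q.1‖} ∪ {q | r ≤ ‖q.2‖}) ≤
      μ.real {y | r ≤ ‖y‖} + ν.real {y | r ≤ ‖y‖} := by
  have htail : MeasurableSet {y : Ed d | r ≤ ‖y‖} :=
    measurableSet_le measurable_const measurable_norm
  rw [← hγ.1, ← hγ.2, map_measureReal_apply measurable_fst htail,
    map_measureReal_apply measurable_snd htail]
  exact measureReal_union_le _ _

theorem sub_le_mul_norm_add_indicator {L C : ℝ≥0} (hL : LipschitzWith L g) {x : Ed d} {r : ℝ}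
    (hC : LipschitzOnWith C g (Metric.ball x r)) (q : Ed d × Ed d) :
    g (x + q.2) - g (x + q.1) ≤ C * ‖q.2 - q.1‖ +
      ({q | r ≤ ‖q.1‖} ∪ {q | r ≤ ‖q.2‖}).indicator (fun q => L * ‖q.2 - q.1‖) q := by
  have hdist : dist (x + q.2) (x + q.1) = ‖q.2 - q.1‖ := by
    rw [dist_add_left, dist_eq_norm]
  by_cases hq : q ∈ {q : Ed d × Ed d | r ≤ ‖q.1‖} ∪ {q | r ≤ ‖q.2‖}
  · have hglobal := hL.dist_le_mul (x + q.2) (x + q.1)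
    rw [hdist, Real.dist_eq] at hglobal
    rw [indicator_of_mem hq]
    linarith [le_abs_self (g (x + q.2) - g (x + q.1)),
      mul_nonneg C.coe_nonneg (norm_nonneg (q.2 - q.1))]
  · obtain ⟨hfst, hsnd⟩ : ‖q.1‖ < r ∧ ‖q.2‖ < r := by simpa using hq
    have hlocal := hC.dist_le_mul (x + q.2) (by simpa using hsnd) (x + q.1) (by simpa using hfst)
    rw [hdist, Real.dist_eq] at hlocal
    rw [indicator_of_notMem hq, add_zero]
    exact (le_abs_self _).trans hlocal

theorem IsCoupling.integral_sub_integral_le [IsProbabilityMeasure μ] (hγ : IsCoupling γ μ ν)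
    (hp : 1 ≤ p) (hg : IsBUC g) {L C : ℝ≥0} (hL : LipschitzWith L g) {x : Ed d} {r : ℝ}
    (hC : LipschitzOnWith C g (Metric.ball x r)) {a : ℝ} (ha : 0 ≤ a)
    (hcost : transportCost p γ ≤ ENNReal.ofReal a) :
    ∫ y, g (x + y) ∂ν - ∫ y, g (x + y) ∂μ ≤
      a * (C + L * (μ.real {y | r ≤ ‖y‖} + ν.real {y | r ≤ ‖y‖}) ^ (1 - 1 / p)) := by
  have := hγ.isProbabilityMeasure
  have := hγ.isProbabilityMeasure_snd
  have hexp : 0 ≤ 1 - 1 / p := sub_nonneg.2 ((div_le_one (by linarith)).2 hp)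
  have hcont := hg.uniformContinuous.continuous
  set B : Set (Ed d × Ed d) := {q | r ≤ ‖q.1‖} ∪ {q | r ≤ ‖q.2‖}
  have hB : MeasurableSet B := (measurableSet_le measurable_const measurable_fst.norm).union
    (measurableSet_le measurable_const measurable_snd.norm)
  have hfst : Integrable (fun q : Ed d × Ed d => g (x + q.1)) γ :=
    (hγ.1 ▸ hg.integrable_translate μ x).comp_measurable measurable_fst
  have hsnd : Integrable (fun q : Ed d × Ed d => g (x + q.2)) γ :=
    (hγ.2 ▸ hg.integrable_translate ν x).comp_measurable measurable_snd
  have hnorm : Integrable (fun q : Ed d × Ed d => ‖q.2 - q.1‖) γ :=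
    (MemLp.integrable (q := ENNReal.ofReal p) (by simpa using hp)
      ⟨by fun_prop, hcost.trans_lt ofReal_lt_top⟩).norm
  have hmean := setIntegral_norm_le_mul_measureReal_rpow hp (by fun_prop) ha hcost univ
  have hfar := setIntegral_norm_le_mul_measureReal_rpow hp (by fun_prop) ha hcost B
  rw [setIntegral_univ, probReal_univ, Real.one_rpow, mul_one] at hmean
  calc ∫ y, g (x + y) ∂ν - ∫ y, g (x + y) ∂μ
      = ∫ q, g (x + q.2) - g (x + q.1) ∂γ := by
        rw [integral_sub hsnd hfst, ← hγ.2, ← hγ.1, integral_map (by fun_prop) (by fun_prop),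
          integral_map (by fun_prop) (by fun_prop)]
    _ ≤ ∫ q, C * ‖q.2 - q.1‖ + B.indicator (fun q => L * ‖q.2 - q.1‖) q ∂γ :=
        integral_mono (hsnd.sub hfst)
          ((hnorm.const_mul _).add ((hnorm.const_mul _).indicator hB))
          (sub_le_mul_norm_add_indicator hL hC)
    _ = C * ∫ q, ‖q.2 - q.1‖ ∂γ + L * ∫ q in B, ‖q.2 - q.1‖ ∂γ := by
        rw [integral_add (hnorm.const_mul _) ((hnorm.const_mul _).indicator hB),
          integral_indicator hB, integral_const_mul, integral_const_mul]
    _ ≤ C * a + L * (a * γ.real B ^ (1 - 1 / p)) := by gcongr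
    _ = a * (C + L * γ.real B ^ (1 - 1 / p)) := by ring
    _ ≤ _ := by
        gcongr
        exact hγ.measureReal_norm_union_le r

theorem integral_sub_integral_le_of_mem_wassersteinBall (hp : 1 ≤ p) (hμ : MemPp p μ) {R : ℝ}
    (hR : 0 ≤ R) (hν : ν ∈ wassersteinBall p μ R) (hg : IsBUC g) {L C : ℝ≥0}
    (hL : LipschitzWith L g) {x : Ed d} {r : ℝ} (hC : LipschitzOnWith C g (Metric.ball x r)) :
    ∫ y, g (x + y) ∂ν - ∫ y, g (x + y) ∂μ ≤
      R * (C + L * (μ.real {y | r ≤ ‖y‖} + ν.real {y | r ≤ ‖y‖}) ^ (1 - 1 / p)) := by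
  have := hμ.1
  set K := C + L * (μ.real {y | r ≤ ‖y‖} + ν.real {y | r ≤ ‖y‖}) ^ (1 - 1 / p)
  have hlim : Tendsto (fun η => (R + η) * K) (𝓝[>] 0) (𝓝 (R * K)) := by
    have hcont : Continuous fun η => (R + η) * K := by fun_prop
    simpa using (hcont.tendsto 0).mono_left nhdsWithin_le_nhds
  refine ge_of_tendsto hlim ?_
  filter_upwards [self_mem_nhdsWithin] with η hη
  obtain ⟨γ, hγ, hcost⟩ := (mem_wassersteinBall_iff hp hμ hR).1 hν η hη
  exact hγ.integral_sub_integral_le hp hg hL hC (add_nonneg hR (le_of_lt hη)) hcost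

theorem norm_gradient (g : Ed d → ℝ) (x : Ed d) : ‖gradient g x‖ = ‖fderiv ℝ g x‖ := by
  rw [gradient, LinearIsometryEquiv.norm_map]

namespace IsC01

theorem isBUC (hg : IsC01 g) : IsBUC g :=
  .of_zeroAtInfty ⟨⟨g, hg.1.1⟩, hg.1.2⟩

theorem exists_lipschitzWith (hg : IsC01 g) : ∃ L : ℝ≥0, LipschitzWith L g := by
  have hcont : Continuous fun x => ‖gradient g x‖ := by
    simpa only [norm_gradient] using (hg.2.1.continuous_fderiv one_ne_zero).norm
  obtain ⟨M, hM⟩ :=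
    (IsBUC.of_zeroAtInfty ⟨⟨_, hcont⟩, by simpa using hg.2.2.norm⟩).bounded
  refine ⟨M.toNNReal, lipschitzWith_of_nnnorm_fderiv_le (𝕜 := ℝ)
    (hg.2.1.differentiable one_ne_zero) fun x => ?_⟩
  rw [← NNReal.coe_le_coe, coe_nnnorm, ← norm_gradient]
  exact ((le_abs_self _).trans (hM x)).trans (Real.le_coe_toNNReal M)

theorem exists_lipschitzOnWith_ball (hg : IsC01 g) (x : Ed d) {ε : ℝ≥0} (hε : 0 < ε) :
    ∃ r > 0, LipschitzOnWith (‖gradient g x‖₊ + ε) g (Metric.ball x r) := by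
  have hlt : ‖fderiv ℝ g x‖₊ < ‖gradient g x‖₊ + ε := by
    rw [show ‖gradient g x‖₊ = ‖fderiv ℝ g x‖₊ from NNReal.eq (norm_gradient g x)]
    exact lt_add_of_pos_right _ hε
  obtain ⟨s, hs, hlip⟩ := hg.2.1.contDiffAt.exists_lipschitzOnWith_of_nnnorm_lt _ hlt
  obtain ⟨r, hr, hball⟩ := Metric.mem_nhds_iff.1 hs
  exact ⟨r, hr, hlip.mono hball⟩

end IsC01

/- With `p > 1`, Hölder makes the contribution of the region away from `x`, where only the global
Lipschitz constant is available, of smaller order than the radius `δ * h`. -/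
theorem IsConvSemigroup.eventually_integral_le_Smu_add {μ : ℝ → Measure (Ed d)} {δ : ℝ}
    (hp : 1 < p) (hδ : 0 ≤ δ) (hμ : IsConvSemigroup p μ) (hμ₀ : WContinuousAtZero p μ)
    (hg : IsC01 g) (x : Ed d) {ε : ℝ} (hε : 0 < ε) :
    ∀ᶠ h in 𝓝[>] 0, ∀ ν ∈ wassersteinBall p (μ h) (δ * h),
      ∫ y, g (x + y) ∂ν ≤ Smu μ h g x + h * (δ * ‖gradient g x‖ + ε) := by
  obtain ⟨L, hL⟩ := hg.exists_lipschitzWith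
  obtain ⟨κ, hκ, hκε⟩ : ∃ κ > 0, δ * (2 * κ) ≤ ε :=
    ⟨ε / (2 * (δ + 1)), by positivity, by
      rw [← mul_assoc, mul_div_assoc', div_le_iff₀ (by positivity)]; nlinarith⟩
  obtain ⟨r, hr, hC⟩ := hg.exists_lipschitzOnWith_ball x (Real.toNNReal_pos.2 hκ)
  have hexp : 0 < 1 - 1 / p := sub_pos.2 ((div_lt_one (by linarith)).2 hp)
  obtain ⟨τ, hLτ, hτ⟩ : ∃ τ, L * (τ + τ) ^ (1 - 1 / p) ≤ κ ∧ 0 < τ := by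
    have hcont : Continuous fun τ : ℝ => (L : ℝ) * (τ + τ) ^ (1 - 1 / p) :=
      continuous_const.mul ((continuous_id.add continuous_id).rpow_const fun _ => .inr hexp.le)
    have hlim := (hcont.tendsto 0).mono_left (nhdsWithin_le_nhds (s := Ioi 0))
    rw [add_zero, Real.zero_rpow hexp.ne', mul_zero] at hlim
    exact ((hlim.eventually_le_const hκ).and self_mem_nhdsWithin).exists
  have htail := hμ.concentratesAtZero_of_subset_wassersteinBall hp.le hδ hμ₀
    (fun _ _ => Subset.rfl) r hr τ hτ
  filter_upwards [htail.filter_mono (nhdsWithin_mono 0 Ioi_subset_Ici_self), self_mem_nhdsWithin]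
    with h hh (hh₀ : 0 < h) ν hν
  have hR : 0 ≤ δ * h := mul_nonneg hδ hh₀.le
  have hμh := hμ.memPp hh₀.le
  have hdiff := integral_sub_integral_le_of_mem_wassersteinBall hp.le hμh hR hν hg.isBUC hL hC
  rw [NNReal.coe_add, coe_nnnorm, Real.coe_toNNReal _ hκ.le] at hdiff
  have hfar : L * ((μ h).real {y | r ≤ ‖y‖} + ν.real {y | r ≤ ‖y‖}) ^ (1 - 1 / p) ≤ κ :=
    le_trans (by gcongr <;> [exact hh _ (self_mem_wassersteinBall hp.le hμh hR); exact hh ν hν]) hLτ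
  have hscale : δ * h * (‖gradient g x‖ + κ + κ) ≤ h * (δ * ‖gradient g x‖ + ε) := by nlinarith
  rw [Smu]
  linarith [mul_le_mul_of_nonneg_left (add_le_add_right hfar (‖gradient g x‖ + κ)) hR]

end GradientEstimate

section FirstOrderExpansion

variable {E : Type*} [NormedAddCommGroup E] {v : ℝ → C₀(E, ℝ)} {v' : C₀(E, ℝ)} {t ε : ℝ}

theorem eventually_abs_sub_add_mul_le (hv : HasDerivAt v v' t) (hε : 0 < ε) :
    ∀ᶠ h in 𝓝[>] 0, ∀ y, |v (t - h) y - v t y + h * v' y| ≤ ε * h := by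
  have hneg : Tendsto (fun h : ℝ => -h) (𝓝[>] 0) (𝓝 0) := by
    simpa using (tendsto_neg (0 : ℝ)).mono_left nhdsWithin_le_nhds
  filter_upwards [hneg.eventually ((hasDerivAt_iff_isLittleO_nhds_zero.1 hv).def hε),
    self_mem_nhdsWithin] with h hh (hh₀ : 0 < h) y
  rw [norm_neg, Real.norm_of_nonneg hh₀.le, ← sub_eq_add_neg, neg_smul, sub_neg_eq_add,
    ← ZeroAtInftyContinuousMap.norm_toBCF_eq_norm] at hh
  exact ((v (t - h) - v t + h • v').toBCF.norm_coe_le_norm y).trans hh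

theorem ConcentratesAtZero.eventually_abs_integral_sub_add_mul_le [MeasurableSpace E] [BorelSpace E]
    {A : ℝ → Set (Measure E)} (hconc : ConcentratesAtZero A (𝓝[≥] 0))
    (hA : ∀ h ≥ 0, ∀ ν ∈ A h, IsProbabilityMeasure ν) (hv : HasDerivAt v v' t) (hε : 0 < ε) :
    ∀ᶠ h in 𝓝[>] 0, ∀ ν ∈ A h, ∀ x,
      |∫ y, v (t - h) (x + y) ∂ν - ∫ y, v t (x + y) ∂ν + h * v' x| ≤ ε * h := by
  have hclose := hconc.eventually_abs_integral_sub_le (eventually_nhdsWithin_of_forall hA)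
    (.of_zeroAtInfty v') (half_pos hε)
  filter_upwards [eventually_abs_sub_add_mul_le hv (half_pos hε),
    hclose.filter_mono (nhdsWithin_mono 0 Ioi_subset_Ici_self), self_mem_nhdsWithin]
    with h hderiv hclose (hh₀ : 0 < h) ν hν x
  have := hA h hh₀.le ν hν
  have hint (g : C₀(E, ℝ)) := (IsBUC.of_zeroAtInfty g).integrable_translate ν x
  have hsplit : ∫ y, v (t - h) (x + y) - v t (x + y) + h * v' (x + y) ∂ν =
      ∫ y, v (t - h) (x + y) ∂ν - ∫ y, v t (x + y) ∂ν + h * ∫ y, v' (x + y) ∂ν := by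
    rw [integral_add (f := fun y => v (t - h) (x + y) - v t (x + y))
      (g := fun y => h * v' (x + y)) ((hint _).sub (hint _)) ((hint _).const_mul h),
      integral_sub (hint _) (hint _), integral_const_mul]
  have hintegral : |∫ y, v (t - h) (x + y) - v t (x + y) + h * v' (x + y) ∂ν| ≤ ε / 2 * h := by
    simpa only [Real.norm_eq_abs, probReal_univ, mul_one] using
      norm_integral_le_of_norm_le_const (μ := ν) (C := ε / 2 * h)
        (f := fun y => v (t - h) (x + y) - v t (x + y) + h * v' (x + y))
        (ae_of_all _ fun y => hderiv (x + y))
  have hscaled : |h * (∫ y, v' (x + y) ∂ν - v' x)| ≤ h * (ε / 2) := by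
    rw [abs_mul, abs_of_pos hh₀]
    exact mul_le_mul_of_nonneg_left (hclose ν hν x) hh₀.le
  rw [hsplit] at hintegral
  rw [abs_le] at hintegral hscaled ⊢
  constructor <;> linarith

end FirstOrderExpansion

section GeneratorExpansion

variable {d : ℕ} {p δ t ε : ℝ} {μ : ℝ → Measure (Ed d)} {g Ag : Ed d → ℝ} {x w : Ed d}

theorem HasGenerator.eventually_abs_Smu_sub_le (hA : HasGenerator μ g Ag) (hε : 0 < ε) :
    ∀ᶠ h in 𝓝[>] 0, ∀ y, |Smu μ h g y - g y - h * Ag y| ≤ ε * h := by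
  filter_upwards [Metric.tendstoUniformly_iff.1 hA ε hε, self_mem_nhdsWithin]
    with h hh (hh₀ : 0 < h) y
  have hquot : |(Smu μ h g y - g y) / h - Ag y| < ε := by
    rw [← Real.dist_eq, dist_comm]
    exact hh y
  calc |Smu μ h g y - g y - h * Ag y|
      = |(Smu μ h g y - g y) / h - Ag y| * h := by
        rw [← abs_of_pos hh₀, ← abs_mul, abs_of_pos hh₀]
        congr 1
        field_simp
    _ ≤ ε * h := by gcongr

theorem HasGenerator.continuous (hμ : IsConvSemigroup p μ) (hg : IsBUC g)
    (hA : HasGenerator μ g Ag) : Continuous Ag := by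
  refine TendstoUniformly.continuous hA (Eventually.frequently ?_)
  filter_upwards [self_mem_nhdsWithin] with h (hh : 0 < h)
  have hSmu := ((hμ.isNiveloid_Smu hh.le).map_isBUC hg).uniformContinuous.continuous
  exact (hSmu.sub hg.uniformContinuous.continuous).div_const h

theorem exists_norm_le_inner_eq_mul_norm {F : Type*} [NormedAddCommGroup F]
    [InnerProductSpace ℝ F] (hδ : 0 ≤ δ) (z : F) : ∃ w : F, ‖w‖ ≤ δ ∧ inner ℝ z w = δ * ‖z‖ := by
  rcases eq_or_ne z 0 with rfl | hz
  · exact ⟨0, by simpa using hδ, by simp⟩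
  · have hz' : ‖z‖ ≠ 0 := norm_ne_zero_iff.2 hz
    refine ⟨(δ / ‖z‖) • z, ?_, ?_⟩
    · rw [norm_smul, norm_div, norm_norm, Real.norm_of_nonneg hδ, div_mul_cancel₀ _ hz']
    · rw [inner_smul_right, real_inner_self_eq_norm_sq]
      field_simp

theorem eventually_le_apply_add_smul {F : Type*} [NormedAddCommGroup F] [InnerProductSpace ℝ F]
    [CompleteSpace F] {g : F → ℝ} {x z : F} (hg : HasGradientAt g z x) (w : F) (hε : 0 < ε) :
    ∀ᶠ h in 𝓝[>] 0, g x + h * (inner ℝ z w - ε) ≤ g (x + h • w) := by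
  have hline := hg.hasFDerivAt.hasLineDerivAt w
  have hlittle := (hasDerivAt_iff_isLittleO_nhds_zero.1 hline).def hε
  filter_upwards [hlittle.filter_mono nhdsWithin_le_nhds, self_mem_nhdsWithin]
    with h hh (hh₀ : 0 < h)
  simp only [zero_add, zero_smul, add_zero, smul_eq_mul, Real.norm_eq_abs, abs_of_pos hh₀,
    InnerProductSpace.toDual_apply_apply] at hh
  linarith [(abs_le.1 hh).1]

variable {v : ℝ → C₀(Ed d, ℝ)} {v' : C₀(Ed d, ℝ)}

namespace IsConvSemigroup

theorem eventually_wassersteinFamily_le (hp : 1 < p) (hδ : 0 ≤ δ) (hμ : IsConvSemigroup p μ)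
    (hμ₀ : WContinuousAtZero p μ) (hv : HasDerivAt v v' t) (hvt : IsC01 (v t))
    (hA : HasGenerator μ (v t) Ag) (x : Ed d) (hε : 0 < ε) :
    ∀ᶠ h in 𝓝[>] 0, wassersteinFamily p δ μ h (v (t - h)) x ≤
      v t x + h * (Ag x + δ * ‖gradient (v t) x‖ - v' x + ε) := by
  have hε₃ : 0 < ε / 3 := by positivity
  have hconc := hμ.concentratesAtZero_of_subset_wassersteinBall hp.le hδ hμ₀ fun _ _ => Subset.rfl
  filter_upwards [self_mem_nhdsWithin, hA.eventually_abs_Smu_sub_le hε₃,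
    hconc.eventually_abs_integral_sub_add_mul_le
      (fun _ _ => isProbabilityMeasure_of_mem_wassersteinBall) hv hε₃,
    hμ.eventually_integral_le_Smu_add hp hδ hμ₀ hvt x hε₃]
    with h (hh₀ : 0 < h) hgen hderiv hgrad
  refine upperExpectation_le
    (wassersteinBall_nonempty hp.le (hμ.memPp hh₀.le) (mul_nonneg hδ hh₀.le)) fun ν hν => ?_
  linarith [(abs_le.1 (hgen x)).2, (abs_le.1 (hderiv ν hν x)).2, hgrad ν hν]

theorem eventually_le_Smu_drift (hp : 1 ≤ p) (hμ : IsConvSemigroup p μ)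
    (hμ₀ : WContinuousAtZero p μ) (hv : HasDerivAt v v' t) (hvt : DifferentiableAt ℝ (v t) x)
    (hA : HasGenerator μ (v t) Ag) (w : Ed d) (hε : 0 < ε) :
    ∀ᶠ h in 𝓝[>] 0, v t x + h * (Ag x + inner ℝ (gradient (v t) x) w - v' x - ε) ≤
      Smu (drift μ w) h (v (t - h)) x := by
  have hε₄ : 0 < ε / 4 := by positivity
  have hmem : ∀ h ≥ 0, {drift μ w h} ⊆ wassersteinBall p (μ h) (‖w‖ * h) := fun h hh =>
    singleton_subset_iff.2 (hμ.drift_mem_wassersteinBall hp le_rfl hh)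
  have hconc := hμ.concentratesAtZero_of_subset_wassersteinBall hp (norm_nonneg w) hμ₀ hmem
  have hbuc := IsBUC.of_zeroAtInfty (v t)
  have hline : Tendsto (fun h : ℝ => Ag (x + h • w)) (𝓝[>] 0) (𝓝 (Ag x)) := by
    have hcont : Continuous fun h : ℝ => Ag (x + h • w) :=
      (hA.continuous hμ hbuc).comp (by fun_prop)
    simpa using (hcont.tendsto 0).mono_left nhdsWithin_le_nhds
  filter_upwards [self_mem_nhdsWithin, hA.eventually_abs_Smu_sub_le hε₄,
    hconc.eventually_abs_integral_sub_add_mul_le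
      (fun h hh ν hν => isProbabilityMeasure_of_mem_wassersteinBall ν (hmem h hh hν)) hv hε₄,
    eventually_le_apply_add_smul hvt.hasGradientAt w hε₄,
    hline.eventually_const_le (sub_lt_self (Ag x) hε₄)]
    with h (hh₀ : 0 < h) hgen hderiv hdir hAg
  have hshift := Smu_drift hμ hh₀.le hbuc.uniformContinuous.continuous w x
  have htime := (abs_le.1 (hderiv _ rfl x)).1
  rw [← Smu, ← Smu, hshift] at htime
  linarith [(abs_le.1 (hgen (x + h • w))).1, mul_le_mul_of_nonneg_left hAg hh₀.le]

end IsConvSemigroup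

end GeneratorExpansion

section Viscosity

variable {d : ℕ} {p δ t : ℝ} {μ : ℝ → Measure (Ed d)} {f : C₀(Ed d, ℝ)}

namespace IsConvSemigroup

theorem isBUC_SlimD (hp : 1 ≤ p) (hδ : 0 ≤ δ) (hμ : IsConvSemigroup p μ) (ht : 0 ≤ t) :
    IsBUC (SlimD p δ μ t f) := by
  rw [SlimD_eq_dyadicLimit]
  exact (hμ.isSupermultiplicative_wassersteinFamily hp hδ).isNiveloid_dyadicLimit ht
    |>.map_isBUC (.of_zeroAtInfty f)

theorem exists_zeroAtInfty_eq_SlimD (hp : 1 ≤ p) (hδ : 0 ≤ δ) (hμ : IsConvSemigroup p μ)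
    (f : C₀(Ed d, ℝ)) :
    ∃ u : ℝ → C₀(Ed d, ℝ), ∀ t ≥ 0, ∀ x, u t x = SlimD p δ μ t f x := by
  have hvanish : ∀ t ≥ 0, Tendsto (SlimD p δ μ t f) (cocompact (Ed d)) (𝓝 0) := fun t ht => by
    rw [SlimD_eq_dyadicLimit]
    exact (hμ.isSupermultiplicative_wassersteinFamily hp hδ).tendsto_dyadicLimit_cocompact
      (isConvSemigroup_drift hp hμ 0).isSubmultiplicative_Smu
      (hμ.isDominatedBy_wassersteinFamily hp (norm_zero.trans_le hδ)) (.of_zeroAtInfty f) ht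
      (hμ.tendsto_wassersteinFamily_cocompact hp hδ ht f) (hμ.tendsto_Smu_drift_cocompact hp 0 ht f)
  have hlift : ∀ t, ∃ g : C₀(Ed d, ℝ), 0 ≤ t → ⇑g = SlimD p δ μ t f := fun t => by
    by_cases ht : 0 ≤ t
    · exact ⟨⟨⟨_, (hμ.isBUC_SlimD hp hδ ht).uniformContinuous.continuous⟩, hvanish t ht⟩,
        fun _ => rfl⟩
    · exact ⟨0, fun h => absurd h ht⟩
  choose u hu using hlift
  exact ⟨u, fun t ht x => congrFun (hu t ht) x⟩

theorem SlimD_zero (hp : 1 ≤ p) (hδ : 0 ≤ δ) (hμ : IsConvSemigroup p μ)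
    (hμ₀ : WContinuousAtZero p μ) (f : C₀(Ed d, ℝ)) : SlimD p δ μ 0 f = f := by
  rw [SlimD_eq_dyadicLimit]
  exact (hμ.isStronglyContinuous_wassersteinFamily hp hδ hμ₀).dyadicLimit_zero_time
    (.of_zeroAtInfty f)

theorem exists_abs_SlimD_sub_le (hp : 1 ≤ p) (hδ : 0 ≤ δ) (hμ : IsConvSemigroup p μ)
    (hμ₀ : WContinuousAtZero p μ) (f : C₀(Ed d, ℝ)) {ε : ℝ} (hε : 0 < ε) :
    ∃ r > 0, ∀ s t, 0 ≤ s → s ≤ t → t - s < r →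
      ∀ x, |SlimD p δ μ t f x - SlimD p δ μ s f x| ≤ ε := by
  rw [SlimD_eq_dyadicLimit]
  exact (hμ.isSupermultiplicative_wassersteinFamily hp hδ).exists_abs_dyadicLimit_sub_le
    (hμ.isStronglyContinuous_wassersteinFamily hp hδ hμ₀)
    (isConvSemigroup_drift hp hμ 0).isSubmultiplicative_Smu
    (hμ.isStronglyContinuous_Smu_drift hp hμ₀ 0)
    (hμ.isDominatedBy_wassersteinFamily hp (norm_zero.trans_le hδ)) (.of_zeroAtInfty f) hε

theorem continuousOn_of_eq_SlimD (hp : 1 ≤ p) (hδ : 0 ≤ δ) (hμ : IsConvSemigroup p μ)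
    (hμ₀ : WContinuousAtZero p μ) {u : ℝ → C₀(Ed d, ℝ)}
    (hu : ∀ t ≥ 0, ∀ x, u t x = SlimD p δ μ t f x) : ContinuousOn u (Ici 0) := by
  refine Metric.continuousOn_iff.2 fun t ht ε hε => ?_
  obtain ⟨r, hr, hclose⟩ := hμ.exists_abs_SlimD_sub_le hp hδ hμ₀ f (half_pos hε)
  refine ⟨r, hr, fun s hs hst => ?_⟩
  rw [← ZeroAtInftyContinuousMap.dist_toBCF_eq_dist]
  refine lt_of_le_of_lt ((BoundedContinuousFunction.dist_le (half_pos hε).le).2 fun x => ?_)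
    (half_lt_self hε)
  change dist (u s x) (u t x) ≤ ε / 2
  rw [hu s hs, hu t ht]
  rw [Real.dist_eq, abs_lt] at hst
  rcases le_total s t with hle | hle
  · rw [dist_comm]
    exact hclose s t hs hle (by linarith) x
  · exact hclose t s ht hle (by linarith) x

theorem SlimD_add_dyadicStep_le (hp : 1 ≤ p) (hδ : 0 ≤ δ) (hμ : IsConvSemigroup p μ)
    (hμ₀ : WContinuousAtZero p μ) (ht : 0 ≤ t) (m : ℕ) (x : Ed d) :
    SlimD p δ μ (t + dyadicStep m) f x ≤
      wassersteinFamily p δ μ (dyadicStep m) (SlimD p δ μ t f) x := by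
  have hS := hμ.isSupermultiplicative_wassersteinFamily hp hδ
  have hf := IsBUC.of_zeroAtInfty f
  have hunif := hS.tendstoUniformly_dyadicIterate
    (isConvSemigroup_drift hp hμ 0).isSubmultiplicative_Smu
    (hμ.isDominatedBy_wassersteinFamily hp (norm_zero.trans_le hδ)) hf ht
    (hμ.tendsto_wassersteinFamily_cocompact hp hδ ht f) (hμ.tendsto_Smu_drift_cocompact hp 0 ht f)
  rw [SlimD_eq_dyadicLimit]
  exact hS.dyadicLimit_add_dyadicStep_le (hμ.isStronglyContinuous_wassersteinFamily hp hδ hμ₀)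
    hf ht hunif m x

theorem Smu_drift_SlimD_le (hp : 1 ≤ p) (hδ : 0 ≤ δ) (hμ : IsConvSemigroup p μ)
    (hμ₀ : WContinuousAtZero p μ) {w : Ed d} (hw : ‖w‖ ≤ δ) (ht : 0 ≤ t) (m : ℕ) (x : Ed d) :
    Smu (drift μ w) (dyadicStep m) (SlimD p δ μ t f) x ≤ SlimD p δ μ (t + dyadicStep m) f x := by
  rw [SlimD_eq_dyadicLimit]
  exact (hμ.isSupermultiplicative_wassersteinFamily hp hδ).le_dyadicLimit_add_dyadicStep
    (hμ.isStronglyContinuous_wassersteinFamily hp hδ hμ₀)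
    (isConvSemigroup_drift hp hμ w).isSubmultiplicative_Smu
    (hμ.isDominatedBy_wassersteinFamily hp hw) (.of_zeroAtInfty f) ht m x

variable {v : ℝ → C₀(Ed d, ℝ)} {v' : C₀(Ed d, ℝ)} {Ag : Ed d → ℝ} {x : Ed d}

theorem timeDeriv_le_of_SlimD_le (hp : 1 < p) (hδ : 0 ≤ δ) (hμ : IsConvSemigroup p μ)
    (hμ₀ : WContinuousAtZero p μ) (ht : 0 < t) (hv : HasDerivAt v v' t) (hvt : IsC01 (v t))
    (hA : HasGenerator μ (v t) Ag) (hle : ∀ s > 0, ∀ y, SlimD p δ μ s f y ≤ v s y)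
    (htouch : v t x = SlimD p δ μ t f x) : v' x ≤ Ag x + δ * ‖gradient (v t) x‖ := by
  refine le_of_forall_pos_le_add fun ε hε => ?_
  obtain ⟨m, hexp, hmt⟩ := (tendsto_dyadicStep.eventually
    ((hμ.eventually_wassersteinFamily_le hp hδ hμ₀ hv hvt hA x hε).and
      (eventually_nhdsWithin_of_eventually_nhds (eventually_lt_nhds ht)))).exists
  set h := dyadicStep m
  have hh₀ : 0 < h := dyadicStep_pos m
  have hth : 0 < t - h := sub_pos.2 hmt
  have hchain : v t x ≤ v t x + h * (Ag x + δ * ‖gradient (v t) x‖ - v' x + ε) := calc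
    v t x = SlimD p δ μ (t - h + h) f x := by rw [sub_add_cancel, htouch]
    _ ≤ wassersteinFamily p δ μ h (SlimD p δ μ (t - h) f) x :=
        hμ.SlimD_add_dyadicStep_le hp.le hδ hμ₀ hth.le m x
    _ ≤ wassersteinFamily p δ μ h (v (t - h)) x :=
        (hμ.isSupermultiplicative_wassersteinFamily hp.le hδ).isNiveloid hh₀.le |>.mono
          (hμ.isBUC_SlimD hp.le hδ hth.le) (.of_zeroAtInfty _) (hle _ hth) x
    _ ≤ v t x + h * (Ag x + δ * ‖gradient (v t) x‖ - v' x + ε) := hexp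
  linarith [nonneg_of_mul_nonneg_right (le_add_iff_nonneg_right (v t x) |>.1 hchain) hh₀]

theorem le_timeDeriv_of_le_SlimD (hp : 1 ≤ p) (hδ : 0 ≤ δ) (hμ : IsConvSemigroup p μ)
    (hμ₀ : WContinuousAtZero p μ) (ht : 0 < t) (hv : HasDerivAt v v' t)
    (hvt : DifferentiableAt ℝ (v t) x) (hA : HasGenerator μ (v t) Ag)
    (hle : ∀ s > 0, ∀ y, v s y ≤ SlimD p δ μ s f y) (htouch : v t x = SlimD p δ μ t f x) :
    Ag x + δ * ‖gradient (v t) x‖ ≤ v' x := by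
  refine le_of_forall_pos_le_add fun ε hε => ?_
  obtain ⟨w, hw, hinner⟩ := exists_norm_le_inner_eq_mul_norm hδ (gradient (v t) x)
  obtain ⟨m, hexp, hmt⟩ := (tendsto_dyadicStep.eventually
    ((hμ.eventually_le_Smu_drift hp hμ₀ hv hvt hA w hε).and
      (eventually_nhdsWithin_of_eventually_nhds (eventually_lt_nhds ht)))).exists
  set h := dyadicStep m
  have hh₀ : 0 < h := dyadicStep_pos m
  have hth : 0 < t - h := sub_pos.2 hmt
  have hchain : v t x + h * (Ag x + inner ℝ (gradient (v t) x) w - v' x - ε) ≤ v t x := calc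
    _ ≤ Smu (drift μ w) h (v (t - h)) x := hexp
    _ ≤ Smu (drift μ w) h (SlimD p δ μ (t - h) f) x :=
        (isConvSemigroup_drift hp hμ w).isNiveloid_Smu hh₀.le |>.mono (.of_zeroAtInfty _)
          (hμ.isBUC_SlimD hp hδ hth.le) (hle _ hth) x
    _ ≤ SlimD p δ μ (t - h + h) f x := hμ.Smu_drift_SlimD_le hp hδ hμ₀ hw hth.le m x
    _ = v t x := by rw [sub_add_cancel, htouch]
  linarith [nonpos_of_mul_nonpos_right (add_le_iff_nonpos_right (v t x) |>.1 hchain) hh₀]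

end IsConvSemigroup

end Viscosity

/-- Feynman–Kac: `u(t) = 𝒮(t)f` is a viscosity solution of
`∂_t u = A^μ u + δ|∇u|` with `u(0) = f`. -/
theorem stmt_1 (d : ℕ) (hd : 1 ≤ d) (p : ℝ) (hp : 1 < p) (δ : ℝ) (hδ : 0 ≤ δ)
    (μ : ℝ → Measure (Ed d)) (hμ : IsConvSemigroup p μ) (hμ0 : WContinuousAtZero p μ)
    (f : C₀(Ed d, ℝ)) :
    ∃ u : ℝ → C₀(Ed d, ℝ),
      (∀ t : ℝ, 0 ≤ t → ∀ x, u t x = SlimD p δ μ t (⇑f) x) ∧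
      IsViscositySubsolD δ μ f u ∧ IsViscositySupersolD δ μ f u := by
  obtain ⟨u, hu⟩ := hμ.exists_zeroAtInfty_eq_SlimD hp.le hδ f
  have hcont : ContinuousOn u (Ici 0) := hμ.continuousOn_of_eq_SlimD hp.le hδ hμ0 hu
  have hzero : u 0 = f := by
    ext x
    rw [hu 0 le_rfl, hμ.SlimD_zero hp.le hδ hμ0]
  refine ⟨u, hu, ⟨hcont, hzero, ?subsolution⟩, ⟨hcont, hzero, ?supersolution⟩⟩
  case subsolution =>
    intro t ht x v v' hv hle htouch Av hA
    exact hμ.timeDeriv_le_of_SlimD_le hp hδ hμ0 ht (hv t ht).1 (hv t ht).2.2 hA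
      (fun s hs y => hu s hs.le y ▸ hle s hs y) (htouch.trans (hu t ht.le x))
  case supersolution =>
    intro t ht x v v' hv hle htouch Av hA
    exact hμ.le_timeDeriv_of_le_SlimD hp.le hδ hμ0 ht (hv t ht).1
      ((hv t ht).2.2.2.1.differentiable one_ne_zero x) hA
      (fun s hs y => hu s hs.le y ▸ hle s hs y) (htouch.trans (hu t ht.le x))
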